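/- arXiv:1003.2338 — 5 statements merged into one kernel-verified Lean document; each statement's English description precedes it below -/
import Mathlib

section
/- Let (A,B) be a concave monotone pair in Mₙ(ℂ) (B ≥ 0, A = h(B) with h nondecreasing concave nonnegative) and let Φ : Mₙ(ℂ) → M_d(ℂ) be a unital positive linear map. Then there exists a unitary V ∈ M_d(ℂ) with |Φ(A)Φ(B)| ≤ (Φ(AB) + V Φ(AB) V*)/2. -/
open scoped Matrix ComplexOrder

/-- `A^p` for a matrix, via continuous functional calculus with the real power function. -/
noncomputable def mpow {n : ℕ} (A : Matrix (Fin n) (Fin n) ℂ) (p : ℝ) : Matrix (Fin n) (Fin n) ℂ :=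
  cfc (fun x : ℝ => x ^ p) A

/-- Matrix absolute value `|X| = (XᴴX)^{1/2}`. -/
noncomputable def matAbs {n : ℕ} (X : Matrix (Fin n) (Fin n) ℂ) : Matrix (Fin n) (Fin n) ℂ :=
  cfc Real.sqrt (Xᴴ * X)

/-- Loewner order: `X ≤ Y` iff `Y - X` is positive semidefinite. -/
def loewnerLE {n : ℕ} (X Y : Matrix (Fin n) (Fin n) ℂ) : Prop := (Y - X).PosSemidef

/-- `(A, B)` is a concave monotone pair: `B ≥ 0` and `A = h(B)` for a nonnegative
nondecreasing concave function `h` on `[0, ∞)`. -/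
def ConcaveMonotonePair {n : ℕ} (A B : Matrix (Fin n) (Fin n) ℂ) : Prop :=
  ∃ h : ℝ → ℝ, B.PosSemidef ∧ MonotoneOn h (Set.Ici 0) ∧ ConcaveOn ℝ (Set.Ici 0) h ∧
    (∀ x ∈ Set.Ici (0 : ℝ), 0 ≤ h x) ∧ A = cfc h B

/-- Spectral form of the functional calculus. -/
lemma cfc_spec {n : ℕ} {B : Matrix (Fin n) (Fin n) ℂ} (hB : B.IsHermitian) (f : ℝ → ℝ) :
    cfc f B = (hB.eigenvectorUnitary : Matrix (Fin n) (Fin n) ℂ) *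
      Matrix.diagonal (fun i => ((f (hB.eigenvalues i) : ℝ) : ℂ)) *
      (hB.eigenvectorUnitary : Matrix (Fin n) (Fin n) ℂ)ᴴ := by
  rw [hB.cfc_eq, Matrix.IsHermitian.cfc, Unitary.conjStarAlgAut_apply]
  rfl

lemma self_spec {n : ℕ} {B : Matrix (Fin n) (Fin n) ℂ} (hB : B.IsHermitian) :
    B = (hB.eigenvectorUnitary : Matrix (Fin n) (Fin n) ℂ) *
      Matrix.diagonal (fun i => ((hB.eigenvalues i : ℝ) : ℂ)) *
      (hB.eigenvectorUnitary : Matrix (Fin n) (Fin n) ℂ)ᴴ := by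
  conv_lhs => rw [hB.spectral_theorem, Unitary.conjStarAlgAut_apply]
  rfl

lemma unit_left {n : ℕ} (U : Matrix.unitaryGroup (Fin n) ℂ) :
    (U : Matrix (Fin n) (Fin n) ℂ)ᴴ * (U : Matrix (Fin n) (Fin n) ℂ) = 1 :=
  Unitary.coe_star_mul_self U

lemma unit_right {n : ℕ} (U : Matrix.unitaryGroup (Fin n) ℂ) :
    (U : Matrix (Fin n) (Fin n) ℂ) * (U : Matrix (Fin n) (Fin n) ℂ)ᴴ = 1 :=
  Unitary.coe_mul_star_self U

/-- A matrix with orthogonal columns factors as a unitary times a diagonal. -/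
lemma orth_cols {d : ℕ} (Y : Matrix (Fin d) (Fin d) ℂ) (l : Fin d → ℝ) (hl : ∀ i, 0 ≤ l i)
    (hY : Yᴴ * Y = Matrix.diagonal (fun i => ((l i : ℝ) : ℂ))) :
    ∃ Z : Matrix (Fin d) (Fin d) ℂ, Z ∈ Matrix.unitaryGroup (Fin d) ℂ ∧
      Y = Z * Matrix.diagonal (fun i => ((Real.sqrt (l i) : ℝ) : ℂ)) := by
  have hent : ∀ i j, ∑ k, star (Y k i) * Y k j = if i = j then ((l i : ℝ) : ℂ) else 0 := by
    intro i j
    have := congrFun (congrFun hY i) j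
    rw [Matrix.mul_apply, Matrix.diagonal_apply] at this
    simpa using this
  let v : Fin d → EuclideanSpace ℂ (Fin d) := fun i =>
    WithLp.toLp 2 (fun k => Y k i * ((Real.sqrt (l i) : ℝ) : ℂ)⁻¹)
  let s : Set (Fin d) := {i | l i ≠ 0}
  have hv : Orthonormal ℂ (s.domRestrict v) := by
    rw [orthonormal_iff_ite]
    rintro ⟨i, hi⟩ ⟨j, hj⟩
    have e : inner ℂ (v i) (v j) = ((Real.sqrt (l i) : ℝ) : ℂ)⁻¹ * ((Real.sqrt (l j) : ℝ) : ℂ)⁻¹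
        * ∑ k, star (Y k i) * Y k j := by
      rw [PiLp.inner_apply, Finset.mul_sum]
      refine Finset.sum_congr rfl fun k _ => ?_
      simp [v]
      ring
    change inner ℂ (v i) (v j) = _
    rw [e, hent]
    by_cases hij : i = j
    · subst hij
      have hp : 0 < l i := lt_of_le_of_ne (hl i) (Ne.symm hi)
      have h1 : ((Real.sqrt (l i) : ℝ) : ℂ) * ((Real.sqrt (l i) : ℝ) : ℂ) = ((l i : ℝ) : ℂ) := by
        rw [← Complex.ofReal_mul, Real.mul_self_sqrt (hl i)]
      have h2 : ((Real.sqrt (l i) : ℝ) : ℂ) ≠ 0 := by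
        exact_mod_cast (Real.sqrt_pos.2 hp).ne'
      simp only [if_true]
      rw [← h1]
      field_simp
    · simp [hij]
  obtain ⟨b, hb⟩ := hv.exists_orthonormalBasis_extension_of_card_eq (by simp)
  refine ⟨Matrix.of fun k i => b i k, ?_, ?_⟩
  · rw [Matrix.mem_unitaryGroup_iff']
    ext i j
    have := (orthonormal_iff_ite.1 b.orthonormal) i j
    rw [PiLp.inner_apply] at this
    rw [Matrix.mul_apply, Matrix.one_apply, ← this]
    refine Finset.sum_congr rfl fun k _ => ?_
    simp [Matrix.star_apply, mul_comm]
  · ext k i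
    rw [Matrix.mul_diagonal, Matrix.of_apply]
    by_cases hi : l i = 0
    · have h0 := hent i i
      rw [if_pos rfl, hi] at h0
      have h1 : ∑ k, ‖Y k i‖ ^ 2 = 0 := by
        have : ((∑ k, ‖Y k i‖ ^ 2 : ℝ) : ℂ) = 0 := by
          rw [← Complex.ofReal_zero, ← h0]
          push_cast
          refine Finset.sum_congr rfl fun k _ => ?_
          rw [← Complex.conj_mul']; rfl
        exact_mod_cast this
      have h2 := (Finset.sum_eq_zero_iff_of_nonneg (fun k _ => by positivity)).1 h1 k
        (Finset.mem_univ _)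
      have : Y k i = 0 := by simpa using h2
      simp [this, hi]
    · have hp : 0 < l i := lt_of_le_of_ne (hl i) (Ne.symm hi)
      have h2 : ((Real.sqrt (l i) : ℝ) : ℂ) ≠ 0 := by
        exact_mod_cast (Real.sqrt_pos.2 hp).ne'
      rw [hb i hi]
      simp [v, h2]

lemma polar {d : ℕ} (X : Matrix (Fin d) (Fin d) ℂ) :
    ∃ W : Matrix (Fin d) (Fin d) ℂ, W ∈ Matrix.unitaryGroup (Fin d) ℂ ∧
      Wᴴ * X = cfc Real.sqrt (Xᴴ * X) := by
  have hP := Matrix.posSemidef_conjTranspose_mul_self X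
  have hH := hP.isHermitian
  set U := hH.eigenvectorUnitary with hU
  have e1 := self_spec hH
  have e2 := cfc_spec hH Real.sqrt
  rw [← hU] at e1 e2
  obtain ⟨Z, hZ, hY⟩ := orth_cols (X * (U : Matrix (Fin d) (Fin d) ℂ)) hH.eigenvalues
    hP.eigenvalues_nonneg (by
      rw [Matrix.conjTranspose_mul]
      calc _ = (U : Matrix (Fin d) (Fin d) ℂ)ᴴ * (Xᴴ * X) * U := by noncomm_ring
        _ = ((U : Matrix (Fin d) (Fin d) ℂ)ᴴ * U) *
          Matrix.diagonal (fun i => ((hH.eigenvalues i : ℝ) : ℂ)) *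
          ((U : Matrix (Fin d) (Fin d) ℂ)ᴴ * U) := by
            conv_lhs => rw [e1]
            noncomm_ring
        _ = _ := by rw [unit_left]; simp)
  have hZ' : Zᴴ * Z = 1 := Matrix.mem_unitaryGroup_iff'.1 hZ
  refine ⟨Z * (U : Matrix (Fin d) (Fin d) ℂ)ᴴ, mul_mem hZ (star U).2, ?_⟩
  rw [e2, Matrix.conjTranspose_mul, Matrix.conjTranspose_conjTranspose]
  have hX : X = Z * Matrix.diagonal (fun i => ((Real.sqrt (hH.eigenvalues i) : ℝ) : ℂ)) *
      (U : Matrix (Fin d) (Fin d) ℂ)ᴴ := by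
    rw [← hY, Matrix.mul_assoc, unit_right, Matrix.mul_one]
  conv_lhs => rw [hX]
  calc _ = (U : Matrix (Fin d) (Fin d) ℂ) * (Zᴴ * Z) *
      Matrix.diagonal (fun i => ((Real.sqrt (hH.eigenvalues i) : ℝ) : ℂ)) *
      (U : Matrix (Fin d) (Fin d) ℂ)ᴴ := by noncomm_ring
    _ = _ := by rw [hZ', Matrix.mul_one]

/-- Weyl-type counting argument. -/
lemma count {d N : ℕ} (e : Fin d ≃ Fin N) (m r : Fin d → ℝ)
    (hm : ∀ i j, e i ≤ e j → m j ≤ m i) (hr : ∀ i j, e i ≤ e j → r j ≤ r i)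
    (hr0 : ∀ i, 0 ≤ r i) (Y : Matrix (Fin d) (Fin d) ℂ)
    (hY0 : ∀ a : Fin d → ℂ, Y *ᵥ a = 0 → ∀ i, (m i : ℂ) * a i = 0)
    (hY : ∀ μ : ℝ, 0 < μ → ∃ t : ℝ, 0 < t ∧ ∀ a : Fin d → ℂ,
      t * ∑ i, (m i - μ) * ‖a i‖ ^ 2 ≤ ∑ k, (r k - μ) * ‖(Y *ᵥ a) k‖ ^ 2) (j : Fin d) :
    m j ≤ r j := by
  by_contra! hlt
  have hμ : 0 < m j := lt_of_le_of_lt (hr0 j) hlt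
  obtain ⟨t, ht, hq⟩ := hY _ hμ
  let ext : ({i : Fin d // e i ≤ e j} → ℂ) →ₗ[ℂ] (Fin d → ℂ) :=
    { toFun := fun a i => if h : e i ≤ e j then a ⟨i, h⟩ else 0
      map_add' := by
        intro a b; ext i; by_cases h : e i ≤ e j <;> simp [h]
      map_smul' := by
        intro a b; ext i; by_cases h : e i ≤ e j <;> simp [h] }
  let L : ({i : Fin d // e i ≤ e j} → ℂ) →ₗ[ℂ] ({k : Fin d // e k < e j} → ℂ) :=
    (LinearMap.funLeft ℂ ℂ (fun k : {k : Fin d // e k < e j} => (k : Fin d))) ∘ₗ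
      Matrix.mulVecLin Y ∘ₗ ext
  have hker : LinearMap.ker L ≠ ⊥ := by
    apply LinearMap.ker_ne_bot_of_finrank_lt
    rw [Module.finrank_fintype_fun_eq_card, Module.finrank_fintype_fun_eq_card]
    exact Fintype.card_lt_of_injective_of_notMem
      (fun k : {k : Fin d // e k < e j} => (⟨k.1, k.2.le⟩ : {i : Fin d // e i ≤ e j}))
      (fun a b h => by simpa [Subtype.ext_iff] using h) (b := ⟨j, le_rfl⟩)
      (by rintro ⟨⟨k, hk⟩, h⟩
          have : k = j := by simpa using h
          subst this; exact lt_irrefl _ hk)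
  obtain ⟨a, ha, hane⟩ := (Submodule.ne_bot_iff _).1 hker
  set b := ext a with hb
  have hbz : ∀ i, ¬ e i ≤ e j → b i = 0 := fun i hi => by simp [hb, ext, hi]
  have hYz : ∀ k, e k < e j → (Y *ᵥ b) k = 0 := fun k hk => congrFun ha ⟨k, hk⟩
  have h1 : 0 ≤ ∑ i, (m i - m j) * ‖b i‖ ^ 2 := by
    refine Finset.sum_nonneg fun i _ => ?_
    by_cases hi : e i ≤ e j
    · exact mul_nonneg (sub_nonneg.2 (hm _ _ hi)) (by positivity)
    · simp [hbz i hi]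
  have hneg : ∀ k ∈ Finset.univ, (r k - m j) * ‖(Y *ᵥ b) k‖ ^ 2 ≤ 0 := by
    intro k _
    by_cases hk : e k < e j
    · simp [hYz k hk]
    · have := hr j k (not_lt.1 hk)
      exact mul_nonpos_of_nonpos_of_nonneg (by linarith) (by positivity)
  have h2 := hq b
  have h3 : ∑ k, (r k - m j) * ‖(Y *ᵥ b) k‖ ^ 2 = 0 :=
    le_antisymm (Finset.sum_nonpos hneg) (le_trans (mul_nonneg ht.le h1) h2)
  have h4 := (Finset.sum_eq_zero_iff_of_nonpos hneg).1 h3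
  have h5 : Y *ᵥ b = 0 := by
    ext k
    by_cases hk : e k < e j
    · exact hYz k hk
    · have h6 := h4 k (Finset.mem_univ _)
      have := hr j k (not_lt.1 hk)
      have h7 : r k - m j ≠ 0 := by linarith
      simpa [h7] using h6
  apply hane
  ext ⟨i, hi⟩
  have h8 := hY0 b h5 i
  have h9 : (m i : ℂ) ≠ 0 := by
    have := hm _ _ hi
    exact_mod_cast (by linarith : m i ≠ 0)
  have h10 : b i = 0 := by simpa [h9] using h8
  simpa [hb, ext, hi] using h10

lemma quad {d : ℕ} (f : Fin d → ℝ) (Y : Matrix (Fin d) (Fin d) ℂ) (a : Fin d → ℂ) :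
    star a ⬝ᵥ ((Yᴴ * Matrix.diagonal (fun i => ((f i : ℝ) : ℂ)) * Y) *ᵥ a) =
      ((∑ k, f k * ‖(Y *ᵥ a) k‖ ^ 2 : ℝ) : ℂ) := by
  rw [← Matrix.mulVec_mulVec, ← Matrix.mulVec_mulVec, Matrix.dotProduct_mulVec,
    ← Matrix.star_mulVec, dotProduct]
  push_cast
  refine Finset.sum_congr rfl fun k _ => ?_
  rw [Matrix.mulVec_diagonal, ← Complex.conj_mul']
  simp only [Pi.star_apply, RCLike.star_def]
  ring

lemma dom {d : ℕ} (M R S : Matrix (Fin d) (Fin d) ℂ) (hM : M.PosSemidef) (hR : R.PosSemidef)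
    (hS0 : ∀ u, S *ᵥ u = 0 → M *ᵥ u = 0)
    (hQ : ∀ μ : ℝ, 0 < μ → ∃ t : ℝ, 0 < t ∧
      (Sᴴ * (R - (μ : ℂ) • 1) * S - (t : ℂ) • (M - (μ : ℂ) • 1)).PosSemidef) :
    ∃ U : Matrix (Fin d) (Fin d) ℂ, U ∈ Matrix.unitaryGroup (Fin d) ℂ ∧
      (U * R * Uᴴ - M).PosSemidef := by
  have hMh := hM.isHermitian
  have hRh := hR.isHermitian
  have e1 := self_spec hMh
  have e2 := self_spec hRh
  set U1 := hMh.eigenvectorUnitary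
  set U2 := hRh.eigenvectorUnitary
  set m := hMh.eigenvalues with hm
  set r := hRh.eigenvalues with hr
  have l1 := unit_left U1
  have l2 := unit_left U2
  have r1 := unit_right U1
  have r2 := unit_right U2
  have hU1 := U1.2
  have hU2 := U2.2
  generalize (U1 : Matrix (Fin d) (Fin d) ℂ) = V1 at *
  generalize (U2 : Matrix (Fin d) (Fin d) ℂ) = V2 at *
  have key : ∀ j, m j ≤ r j := by
    refine count (Fintype.equivOfCardEq (Fintype.card_fin _)).symm m r
      (fun i j h => hMh.eigenvalues₀_antitone h) (fun i j h => hRh.eigenvalues₀_antitone h)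
      hR.eigenvalues_nonneg (V2ᴴ * S * V1) ?_ ?_
    · intro a ha i
      have h1 : S *ᵥ (V1 *ᵥ a) = 0 := by
        have : V2 *ᵥ ((V2ᴴ * S * V1) *ᵥ a) = 0 := by rw [ha, Matrix.mulVec_zero]
        rw [Matrix.mulVec_mulVec, ← Matrix.mul_assoc, ← Matrix.mul_assoc, r2, Matrix.one_mul] at this
        rwa [Matrix.mulVec_mulVec]
      have h2 := hS0 _ h1
      have h3 : V1ᴴ *ᵥ (M *ᵥ (V1 *ᵥ a)) = 0 := by rw [h2, Matrix.mulVec_zero]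
      rw [e1, Matrix.mulVec_mulVec, Matrix.mulVec_mulVec] at h3
      have h4 : V1ᴴ * (V1 * Matrix.diagonal (fun i => ((m i : ℝ) : ℂ)) * V1ᴴ * V1) =
          Matrix.diagonal (fun i => ((m i : ℝ) : ℂ)) := by
        calc _ = (V1ᴴ * V1) * Matrix.diagonal (fun i => ((m i : ℝ) : ℂ)) * (V1ᴴ * V1) := by
              noncomm_ring
          _ = _ := by rw [l1]; simp
      rw [← Matrix.mul_assoc, Matrix.mul_assoc, ← Matrix.mul_assoc] at h3
      have h5 := congrFun h3 i
      rw [← Matrix.mul_assoc] at h4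
      simp only [Matrix.mul_assoc] at h3 h4
      rw [h4] at h3
      have h6 := congrFun h3 i
      rw [Matrix.mulVec_diagonal] at h6
      simpa using h6
    · intro μ hμ
      obtain ⟨t, ht, hp⟩ := hQ μ hμ
      refine ⟨t, ht, fun a => ?_⟩
      have hp1 := hp.conjTranspose_mul_mul_same V1
      have dsub : ∀ f : Fin d → ℝ, Matrix.diagonal (fun i => (((f i - μ : ℝ)) : ℂ)) =
          Matrix.diagonal (fun i => ((f i : ℝ) : ℂ)) - (μ : ℂ) • 1 := by
        intro f
        ext i j
        by_cases hij : i = j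
        · subst hij; simp
        · simp [hij]
      have hE : V1ᴴ * (Sᴴ * (R - (μ : ℂ) • 1) * S - (t : ℂ) • (M - (μ : ℂ) • 1)) * V1 =
          (V2ᴴ * S * V1)ᴴ * Matrix.diagonal (fun i => (((r i - μ : ℝ)) : ℂ)) * (V2ᴴ * S * V1) -
          (t : ℂ) • ((1 : Matrix (Fin d) (Fin d) ℂ)ᴴ *
            Matrix.diagonal (fun i => (((m i - μ : ℝ)) : ℂ)) * 1) := by
        have a1 : R - (μ : ℂ) • 1 = V2 * Matrix.diagonal (fun i => (((r i - μ : ℝ)) : ℂ)) * V2ᴴ := by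
          rw [dsub, Matrix.mul_sub, Matrix.sub_mul, ← e2, Matrix.mul_smul, Matrix.smul_mul,
            Matrix.mul_one, r2]
        have a2 : M - (μ : ℂ) • 1 = V1 * Matrix.diagonal (fun i => (((m i - μ : ℝ)) : ℂ)) * V1ᴴ := by
          rw [dsub, Matrix.mul_sub, Matrix.sub_mul, ← e1, Matrix.mul_smul, Matrix.smul_mul,
            Matrix.mul_one, r1]
        rw [a1, a2, Matrix.mul_sub, Matrix.sub_mul, Matrix.mul_smul, Matrix.smul_mul]
        congr 1
        · simp only [Matrix.conjTranspose_mul, Matrix.conjTranspose_conjTranspose, Matrix.mul_assoc]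
        · congr 1
          rw [Matrix.conjTranspose_one, Matrix.one_mul, Matrix.mul_one]
          calc _ = (V1ᴴ * V1) * Matrix.diagonal (fun i => ((m i - μ : ℝ) : ℂ)) * (V1ᴴ * V1) := by
                noncomm_ring
            _ = _ := by rw [l1]; simp
      rw [hE] at hp1
      have h2 := hp1.dotProduct_mulVec_nonneg a
      rw [Matrix.sub_mulVec, Matrix.smul_mulVec, dotProduct_sub, dotProduct_smul, quad, quad,
        smul_eq_mul, ← Complex.ofReal_mul, ← Complex.ofReal_sub, Complex.zero_le_real,
        Matrix.one_mulVec] at h2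
      linarith
  refine ⟨V1 * V2ᴴ, mul_mem hU1 (Unitary.star_mem hU2), ?_⟩
  have : V1 * V2ᴴ * R * (V1 * V2ᴴ)ᴴ - M =
      V1 * Matrix.diagonal (fun i => ((r i - m i : ℝ) : ℂ)) * V1ᴴ := by
    have dd : Matrix.diagonal (fun i => ((r i - m i : ℝ) : ℂ)) =
        Matrix.diagonal (fun i => ((r i : ℝ) : ℂ)) - Matrix.diagonal (fun i => ((m i : ℝ) : ℂ)) := by
      rw [Matrix.diagonal_sub]; simp
    rw [dd, Matrix.mul_sub, Matrix.sub_mul, ← e1, Matrix.conjTranspose_mul,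
      Matrix.conjTranspose_conjTranspose]
    congr 1
    conv_lhs => rw [e2]
    calc _ = V1 * (V2ᴴ * V2) * Matrix.diagonal (fun i => ((r i : ℝ) : ℂ)) * (V2ᴴ * V2) * V1ᴴ := by
          noncomm_ring
      _ = _ := by rw [l2]; simp
  rw [this]
  refine Matrix.PosSemidef.mul_mul_conjTranspose_same (Matrix.PosSemidef.diagonal ?_) _
  intro i
  simpa using key i

/-- Scalar part: choice of the thresholds. -/
lemma scalar {h : ℝ → ℝ} (hmono : MonotoneOn h (Set.Ici 0)) (hconc : ConcaveOn ℝ (Set.Ici 0) h)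
    (hpos : ∀ x ∈ Set.Ici (0 : ℝ), 0 ≤ h x) (hne : ∀ x, 0 < x → 0 < h x) :
    (∀ x, 0 ≤ x → (x / h x) * h x = x) ∧ (∀ x, 0 ≤ x → 0 ≤ x / h x) ∧
    ∀ μ : ℝ, 0 < μ → ∃ c D : ℝ, 0 < c ∧ 0 < D ∧ c * D = μ ∧
      ∀ x, 0 ≤ x → 0 ≤ (h x ^ 2 - D) * (x / h x - c) := by
  refine ⟨?_, ?_, ?_⟩
  · intro x hx
    rcases hx.eq_or_lt with rfl | hx
    · simp
    · exact div_mul_cancel₀ _ (hne x hx).ne'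
  · intro x hx
    exact div_nonneg hx (hpos x hx)
  · intro μ hμ
    have hcont : ContinuousOn h (Set.Ioi 0) := by
      have := hconc.continuousOn_interior
      rwa [interior_Ici] at this
    have h1 := hne 1 one_pos
    obtain ⟨y, hy0, hy⟩ : ∃ y, 0 < y ∧ y * h y = μ := by
      set ε := min 1 (μ / h 1)
      set N := max 1 (μ / h 1)
      have hε : 0 < ε := lt_min one_pos (div_pos hμ h1)
      have hN : 1 ≤ N := le_max_left _ _
      have hεN : ε ≤ N := (min_le_left _ _).trans hN
      have hc : ContinuousOn (fun y => y * h y) (Set.Icc ε N) :=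
        continuousOn_id.mul (hcont.mono fun x hx => lt_of_lt_of_le hε hx.1)
      have hμ' : μ / h 1 * h 1 = μ := div_mul_cancel₀ _ h1.ne'
      have hlo : ε * h ε ≤ μ := by
        have := hmono (Set.mem_Ici.2 hε.le) (Set.mem_Ici.2 zero_le_one) (min_le_left _ _)
        calc ε * h ε ≤ μ / h 1 * h 1 :=
              mul_le_mul (min_le_right _ _) this (hpos _ hε.le) (div_pos hμ h1).le
          _ = μ := hμ'
      have hhi : μ ≤ N * h N := by
        have := hmono (Set.mem_Ici.2 zero_le_one) (Set.mem_Ici.2 (by linarith)) hN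
        calc μ = μ / h 1 * h 1 := hμ'.symm
          _ ≤ N * h N := mul_le_mul (le_max_right _ _) this h1.le (by linarith)
      obtain ⟨y, hy, hy'⟩ := intermediate_value_Icc hεN hc ⟨hlo, hhi⟩
      exact ⟨y, lt_of_lt_of_le hε hy.1, hy'⟩
    have hhy := hne y hy0
    have hdiv : ∀ a b, 0 ≤ a → 0 < b → a ≤ b → a / h a ≤ b / h b := by
      intro a b ha hb hab
      rcases ha.eq_or_lt with rfl | ha
      · simpa using div_nonneg hb.le (hpos b hb.le)
      · rw [div_le_div_iff₀ (hne a ha) (hne b hb)]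
        have := hconc.2 (Set.mem_Ici.2 le_rfl) (Set.mem_Ici.2 hb.le)
          (show (0 : ℝ) ≤ 1 - a / b by rw [sub_nonneg]; exact (div_le_one hb).2 hab)
          (show 0 ≤ a / b from (div_pos ha hb).le) (by ring)
        simp only [smul_eq_mul, mul_zero, zero_add] at this
        rw [div_mul_cancel₀ _ hb.ne'] at this
        have h0 : 0 ≤ (1 - a / b) * h 0 :=
          mul_nonneg (by rw [sub_nonneg]; exact (div_le_one hb).2 hab) (hpos 0 (Set.mem_Ici.2 le_rfl))
        have h3 : a / b * h b ≤ h a := by linarith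
        calc a * h b = (a / b * h b) * b := by field_simp
          _ ≤ h a * b := mul_le_mul_of_nonneg_right h3 hb.le
          _ = b * h a := mul_comm _ _
    refine ⟨y / h y, h y ^ 2, div_pos hy0 hhy, by positivity, ?_, ?_⟩
    · rw [← hy]; field_simp
    · intro x hx
      rcases le_total x y with hxy | hxy
      · have a1 := hmono (Set.mem_Ici.2 hx) (Set.mem_Ici.2 hy0.le) hxy
        have a2 := hdiv x y hx hy0 hxy
        have a3 := pow_le_pow_left₀ (hpos x hx) a1 2
        exact mul_nonneg_of_nonpos_of_nonpos (by linarith) (by linarith)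
      · have a1 := hmono (Set.mem_Ici.2 hy0.le) (Set.mem_Ici.2 hx) hxy
        have a2 := hdiv y x hy0.le (lt_of_lt_of_le hy0 hxy) hxy
        have a3 := pow_le_pow_left₀ hhy.le a1 2
        exact mul_nonneg (by linarith) (by linarith)

lemma zero_case {h : ℝ → ℝ} (hmono : MonotoneOn h (Set.Ici 0))
    (hconc : ConcaveOn ℝ (Set.Ici 0) h) (hpos : ∀ x ∈ Set.Ici (0 : ℝ), 0 ≤ h x)
    {b : ℝ} (hb : 0 < b) (h0 : h b = 0) (x : ℝ) (hx : 0 ≤ x) : h x = 0 := by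
  refine le_antisymm ?_ (hpos x hx)
  rcases le_total x b with hxb | hxb
  · exact (hmono (Set.mem_Ici.2 hx) (Set.mem_Ici.2 hb.le) hxb).trans h0.le
  · have hx0 : 0 < x := lt_of_lt_of_le hb hxb
    have hle : b / x ≤ 1 := (div_le_one hx0).2 hxb
    have := hconc.2 (Set.mem_Ici.2 le_rfl) (Set.mem_Ici.2 hx)
          (show (0 : ℝ) ≤ 1 - b / x by linarith) (show 0 ≤ b / x from (div_pos hb hx0).le) (by ring)
    simp only [smul_eq_mul, mul_zero, zero_add] at this
    rw [div_mul_cancel₀ _ hx0.ne', h0] at this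
    have h1 : 0 ≤ (1 - b / x) * h 0 := mul_nonneg (by linarith) (hpos 0 (Set.mem_Ici.2 le_rfl))
    have h2 : 0 < b / x := div_pos hb hx0
    nlinarith

/-- Compression of the functional calculus of `B` under `Φ`. -/
lemma povm {n d : ℕ} {B : Matrix (Fin n) (Fin n) ℂ} (hB : B.PosSemidef)
    (Φ : Matrix (Fin n) (Fin n) ℂ →ₗ[ℂ] Matrix (Fin d) (Fin d) ℂ)
    (hΦ1 : Φ 1 = 1) (hΦpos : ∀ X : Matrix (Fin n) (Fin n) ℂ, X.PosSemidef → (Φ X).PosSemidef) :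
    ∃ E : Fin n → Matrix (Fin d) (Fin d) ℂ, (∀ i, (E i).PosSemidef) ∧ ∑ i, E i = 1 ∧
      ∀ f : ℝ → ℝ, Φ (cfc f B) = ∑ i, ((f (hB.isHermitian.eigenvalues i) : ℝ) : ℂ) • E i := by
  set U : Matrix (Fin n) (Fin n) ℂ :=
    (hB.isHermitian.eigenvectorUnitary : Matrix (Fin n) (Fin n) ℂ) with hU
  have hf : ∀ f : ℝ → ℝ, Φ (cfc f B) = ∑ i, ((f (hB.isHermitian.eigenvalues i) : ℝ) : ℂ) •
      Φ (U * Matrix.single i i 1 * Uᴴ) := by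
    intro f
    rw [cfc_spec hB.isHermitian, ← hU]
    have : Matrix.diagonal (fun i => ((f (hB.isHermitian.eigenvalues i) : ℝ) : ℂ)) =
        ∑ i, ((f (hB.isHermitian.eigenvalues i) : ℝ) : ℂ) • Matrix.single i i (1 : ℂ) := by
      ext j k
      rw [Matrix.sum_apply, Matrix.diagonal_apply]
      simp only [Matrix.smul_apply, Matrix.single_apply, smul_eq_mul, mul_ite, mul_one, mul_zero]
      by_cases hjk : j = k
      · subst hjk; simp
      · rw [if_neg hjk, Finset.sum_eq_zero]
        intro i _
        rw [if_neg]
        rintro ⟨rfl, rfl⟩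
        exact hjk rfl
    rw [this, Matrix.mul_sum, Matrix.sum_mul, map_sum]
    refine Finset.sum_congr rfl fun i _ => ?_
    rw [Matrix.mul_smul, Matrix.smul_mul, map_smul]
  refine ⟨fun i => Φ (U * Matrix.single i i 1 * Uᴴ), fun i => ?_, ?_, hf⟩
  · apply hΦpos
    apply Matrix.PosSemidef.mul_mul_conjTranspose_same
    rw [← Matrix.diagonal_single]
    apply Matrix.PosSemidef.diagonal
    rw [Pi.single_nonneg]; exact zero_le_one
  · have := hf (fun _ => 1)
    rw [cfc_const_one ℝ B hB.isHermitian.isSelfAdjoint, hΦ1] at this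
    simpa using this.symm

lemma core {n d : ℕ} (E : Fin n → Matrix (Fin d) (Fin d) ℂ) (hE : ∀ i, (E i).PosSemidef)
    (hE1 : ∑ i, E i = 1) (a c : Fin n → ℝ) (hc : ∀ i, 0 ≤ c i)
    (hth : ∀ μ : ℝ, 0 < μ → ∃ c0 D : ℝ, 0 < c0 ∧ 0 < D ∧ c0 * D = μ ∧
      ∀ i, 0 ≤ (a i ^ 2 - D) * (c i - c0))
    (S T R : Matrix (Fin d) (Fin d) ℂ) (hS : S = ∑ i, (a i : ℂ) • E i)
    (hT : T = ∑ i, ((c i : ℂ) * (a i : ℂ)) • E i)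
    (hR : R = ∑ i, ((c i : ℂ) * (a i : ℂ) ^ 2) • E i) :
    ∃ V : Matrix (Fin d) (Fin d) ℂ, V ∈ Matrix.unitaryGroup (Fin d) ℂ ∧
      ((2 : ℂ)⁻¹ • (R + V * R * Vᴴ) - cfc Real.sqrt ((S * T)ᴴ * (S * T))).PosSemidef := by
  have hsum : ∀ f : Fin n → ℝ, (∀ i, 0 ≤ f i) → (∑ i, (f i : ℂ) • E i).PosSemidef := by
    intro f hf
    refine Matrix.posSemidef_sum _ fun i _ => (hE i).smul ?_
    exact_mod_cast hf i
  have hherm : ∀ f : Fin n → ℝ, (∑ i, (f i : ℂ) • E i)ᴴ = ∑ i, (f i : ℂ) • E i := by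
    intro f
    rw [Matrix.conjTranspose_sum]
    refine Finset.sum_congr rfl fun i _ => ?_
    rw [Matrix.conjTranspose_smul, (hE i).isHermitian.eq]
    simp
  set K := ∑ i, (c i : ℂ) • E i with hK
  have hSh : Sᴴ = S := by rw [hS, hherm]
  have hTh : Tᴴ = T := by
    have := hherm (fun i => c i * a i)
    push_cast at this
    rw [hT, this]
  have hRp : R.PosSemidef := by
    have := hsum (fun i => c i * a i ^ 2) (fun i => mul_nonneg (hc i) (sq_nonneg _))
    push_cast at this
    rwa [hR]
  have hKp : K.PosSemidef := hsum c hc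
  -- Kadison type inequality
  have hKad : (∑ i, ((a i : ℂ) ^ 2) • E i - S * S).PosSemidef := by
    have h1 : (∑ i, (S - (a i : ℂ) • 1)ᴴ * E i * (S - (a i : ℂ) • 1)).PosSemidef :=
      Matrix.posSemidef_sum _ fun i _ => (hE i).conjTranspose_mul_mul_same _
    convert h1 using 1
    have : ∀ i, (S - (a i : ℂ) • 1)ᴴ * E i * (S - (a i : ℂ) • 1) =
        S * E i * S - S * ((a i : ℂ) • E i) - ((a i : ℂ) • E i) * S + ((a i : ℂ) ^ 2) • E i := by
      intro i
      rw [Matrix.conjTranspose_sub, hSh, Matrix.conjTranspose_smul, Matrix.conjTranspose_one]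
      simp only [RCLike.star_def, Complex.conj_ofReal, sub_mul, mul_sub, smul_mul_assoc,
        mul_smul_comm, one_mul, mul_one, smul_sub, smul_smul, pow_two]
      module
    simp only [this, Finset.sum_add_distrib, Finset.sum_sub_distrib, ← Finset.mul_sum,
      ← Finset.sum_mul, hE1, ← hS]
    noncomm_ring
  obtain ⟨U, hU, hUp⟩ := dom (S * K * S) R S
    (by simpa [hSh] using hKp.conjTranspose_mul_mul_same S) hRp
    (fun u hu => by rw [← Matrix.mulVec_mulVec, hu, Matrix.mulVec_zero]) (by
      intro μ hμ
      obtain ⟨c0, D, hc0, hD, hcD, hprod⟩ := hth μ hμ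
      refine ⟨D, hD, ?_⟩
      have q1 := hsum _ hprod
      have q2 := hKad.smul (show (0 : ℂ) ≤ (c0 : ℂ) by exact_mod_cast hc0.le)
      have q3 := (q1.add q2).conjTranspose_mul_mul_same S
      have q4 := (Matrix.posSemidef_conjTranspose_mul_self (S * S - (D : ℂ) • 1)).smul
        (show (0 : ℂ) ≤ (c0 : ℂ) by exact_mod_cast hc0.le)
      have q5 := q3.add q4
      convert q5 using 1
      have s1 : ∑ i, (((a i ^ 2 - D) * (c i - c0) : ℝ) : ℂ) • E i =
          R - (c0 : ℂ) • (∑ i, ((a i : ℂ) ^ 2) • E i) - (D : ℂ) • K + ((D : ℂ) * c0) • 1 := by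
        rw [hR, hK, ← hE1]
        simp only [Finset.smul_sum, ← Finset.sum_sub_distrib, ← Finset.sum_add_distrib]
        refine Finset.sum_congr rfl fun i _ => ?_
        push_cast
        module
      rw [s1, ← hcD]
      simp only [Matrix.conjTranspose_sub, Matrix.conjTranspose_mul, hSh,
        Matrix.conjTranspose_smul, Matrix.conjTranspose_one, RCLike.star_def, Complex.conj_ofReal]
      push_cast
      simp only [sub_mul, mul_sub, add_mul, mul_add, smul_mul_assoc, smul_sub,
        mul_smul_comm, one_mul, mul_one, smul_smul, mul_assoc]
      module)
  obtain ⟨W, hW, hWX⟩ := polar (S * T)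
  have hW1 : Wᴴ * W = 1 := Matrix.mem_unitaryGroup_iff'.1 hW
  set P := cfc Real.sqrt ((S * T)ᴴ * (S * T)) with hP
  have hPh : Pᴴ = P := by
    have : IsSelfAdjoint P := cfc_predicate _ _
    exact this
  have hWX' : T * S * W = P := by
    rw [← hPh, ← hWX]
    simp [Matrix.conjTranspose_mul, hSh, hTh, Matrix.mul_assoc]
  refine ⟨Wᴴ * U, mul_mem (Unitary.star_mem hW) hU, ?_⟩
  have p1 := hUp.conjTranspose_mul_mul_same W
  have p2 : (∑ i, (c i : ℂ) • ((S * W - (a i : ℂ) • 1)ᴴ * E i *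
      (S * W - (a i : ℂ) • 1))).PosSemidef :=
    Matrix.posSemidef_sum _ fun i _ => ((hE i).conjTranspose_mul_mul_same _).smul
      (by exact_mod_cast hc i)
  have p3 : ∑ i, (c i : ℂ) • ((S * W - (a i : ℂ) • 1)ᴴ * E i * (S * W - (a i : ℂ) • 1)) =
      Wᴴ * S * K * (S * W) - P - P + R := by
    have : ∀ i, (c i : ℂ) • ((S * W - (a i : ℂ) • 1)ᴴ * E i * (S * W - (a i : ℂ) • 1)) =
        Wᴴ * S * ((c i : ℂ) • E i) * (S * W) - Wᴴ * S * (((c i : ℂ) * (a i : ℂ)) • E i)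
          - (((c i : ℂ) * (a i : ℂ)) • E i) * (S * W) + ((c i : ℂ) * (a i : ℂ) ^ 2) • E i := by
      intro i
      rw [Matrix.conjTranspose_sub, Matrix.conjTranspose_mul, hSh, Matrix.conjTranspose_smul,
        Matrix.conjTranspose_one]
      simp only [RCLike.star_def, Complex.conj_ofReal, sub_mul, mul_sub, smul_mul_assoc,
        mul_smul_comm, one_mul, mul_one, smul_smul, pow_two, smul_sub, mul_assoc]
      module
    simp only [this, Finset.sum_add_distrib, Finset.sum_sub_distrib, ← Finset.mul_sum,
      ← Finset.sum_mul, ← hT, ← hR, ← hK]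
    have e1 : Wᴴ * S * T = P := by rw [← hWX, Matrix.mul_assoc]
    have e2 : T * (S * W) = P := by rw [← hWX', Matrix.mul_assoc]
    rw [e1, e2]
  have p4 := (p1.add p2).smul (show (0 : ℂ) ≤ (2 : ℂ)⁻¹ by
    rw [show (2 : ℂ)⁻¹ = ((2⁻¹ : ℝ) : ℂ) by push_cast; rfl]
    exact_mod_cast (by norm_num : (0 : ℝ) ≤ 2⁻¹))
  convert p4 using 1
  rw [p3]
  simp only [Matrix.conjTranspose_mul, Matrix.conjTranspose_conjTranspose, mul_sub, sub_mul,
    mul_assoc]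
  module

/-- For a concave monotone pair `(A, B)` and a unital positive linear map `Φ`, there is a
unitary `V` with `|Φ(A) Φ(B)| ≤ (Φ(AB) + V Φ(AB) V*)/2`. -/
theorem concave_pair_abs_inequality {n d : ℕ} (A B : Matrix (Fin n) (Fin n) ℂ)
    (hAB : ConcaveMonotonePair A B)
    (Φ : Matrix (Fin n) (Fin n) ℂ →ₗ[ℂ] Matrix (Fin d) (Fin d) ℂ)
    (hΦ1 : Φ 1 = 1) (hΦpos : ∀ X : Matrix (Fin n) (Fin n) ℂ, X.PosSemidef → (Φ X).PosSemidef) :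
    ∃ V : Matrix (Fin d) (Fin d) ℂ, V ∈ Matrix.unitaryGroup (Fin d) ℂ ∧
      loewnerLE (matAbs (Φ A * Φ B)) ((2 : ℂ)⁻¹ • (Φ (A * B) + V * Φ (A * B) * Vᴴ)) := by
  obtain ⟨h, hB, hmono, hconc, hpos, hA⟩ := hAB
  obtain ⟨E, hE, hE1, hf⟩ := povm hB Φ hΦ1 hΦpos
  have hb : ∀ i, 0 ≤ hB.isHermitian.eigenvalues i := hB.eigenvalues_nonneg
  have hBid : B = cfc (fun x : ℝ => x) B := (cfc_id' ℝ B hB.isHermitian.isSelfAdjoint).symm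
  have hABc : A * B = cfc (fun x => h x * x) B := by
    have hfin : ∀ g : ℝ → ℝ, ContinuousOn g (spectrum ℝ B) := fun g =>
      B.finite_real_spectrum.continuousOn g
    rw [cfc_mul h (fun x => x) B (hfin _) (hfin _), ← hA, ← hBid]
  have hSe := hf h
  rw [← hA] at hSe
  have hTe := hf (fun x => x)
  rw [← hBid] at hTe
  have hRe := hf (fun x => h x * x)
  rw [← hABc] at hRe
  by_cases hne : ∀ x, 0 < x → 0 < h x
  · obtain ⟨s1, s2, s3⟩ := scalar hmono hconc hpos hne
    refine core E hE hE1 (fun i => h (hB.isHermitian.eigenvalues i))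
      (fun i => hB.isHermitian.eigenvalues i / h (hB.isHermitian.eigenvalues i))
      (fun i => s2 _ (hb i)) ?_ (Φ A) (Φ B) (Φ (A * B)) hSe ?_ ?_
    · intro μ hμ
      obtain ⟨c0, D, h1, h2, h3, h4⟩ := s3 μ hμ
      exact ⟨c0, D, h1, h2, h3, fun i => h4 _ (hb i)⟩
    · rw [hTe]
      refine Finset.sum_congr rfl fun i _ => ?_
      rw [← Complex.ofReal_mul, s1 _ (hb i)]
    · rw [hRe]
      refine Finset.sum_congr rfl fun i _ => ?_
      rw [pow_two, ← mul_assoc, ← Complex.ofReal_mul, s1 _ (hb i), ← Complex.ofReal_mul, mul_comm]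
  · push Not at hne
    obtain ⟨x, hx, hx0⟩ := hne
    have hz := zero_case hmono hconc hpos hx (le_antisymm hx0 (hpos x hx.le))
    have hS0 : Φ A = 0 := by
      rw [hSe]
      exact Finset.sum_eq_zero fun i _ => by rw [hz _ (hb i)]; simp
    have hR0 : Φ (A * B) = 0 := by
      rw [hRe]
      exact Finset.sum_eq_zero fun i _ => by rw [hz _ (hb i)]; simp
    refine ⟨1, one_mem _, ?_⟩
    rw [loewnerLE, matAbs, hS0, hR0]
    have : cfc Real.sqrt (0 : Matrix (Fin d) (Fin d) ℂ) = 0 := by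
      rw [cfc_apply_zero]; simp
    simp [this, Matrix.PosSemidef.zero]
end

section
/- Let (A,B) be a concave monotone pair in Mₙ(ℂ) and Φ : Mₙ(ℂ) → M_d(ℂ) a unital positive linear map. Then |Φ(A)Φ(B)| is weakly log-majorized by Φ(AB): for every k, the product of the k largest eigenvalues of |Φ(A)Φ(B)| is at most the product of the k largest eigenvalues of Φ(AB). -/
open scoped Matrix ComplexOrder

/-- The eigenvalues of a Hermitian matrix, arranged in decreasing order (junk value otherwise). -/
noncomputable def eigDesc {m : ℕ} (X : Matrix (Fin m) (Fin m) ℂ) : Fin m → ℝ :=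
  if hX : X.IsHermitian then fun j => (hX.eigenvalues ∘ Tuple.sort hX.eigenvalues) j.rev else 0


lemma aux_scalar {h : ℝ → ℝ} (hm : MonotoneOn h (Set.Ici 0)) (hc : ConcaveOn ℝ (Set.Ici 0) h)
    (h0 : ∀ x ∈ Set.Ici (0 : ℝ), 0 ≤ h x) {y b : ℝ} (hy : 0 < y) (hb : 0 ≤ b) :
    0 ≤ 2 * h y * (h b * b) - y * h b ^ 2 - 2 * h y ^ 2 * b + h y ^ 2 * y := by
  have star : ∀ p q : ℝ, 0 ≤ p → p ≤ q → 0 < q → p * h q ≤ q * h p := by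
    intro p q hp hpq hq
    have h1 := hc.2 (show (0:ℝ) ∈ Set.Ici 0 by simp) (show q ∈ Set.Ici 0 by simpa using hq.le)
      (show 0 ≤ 1 - p / q by rw [sub_nonneg, div_le_one hq]; exact hpq)
      (show 0 ≤ p / q by positivity) (by ring)
    simp only [smul_eq_mul, mul_zero, zero_add] at h1
    rw [div_mul_cancel₀ _ hq.ne'] at h1
    have h2 : 0 ≤ (1 - p / q) * h 0 :=
      mul_nonneg (by rw [sub_nonneg, div_le_one hq]; exact hpq) (h0 0 (by simp))
    have h3 : p / q * h q ≤ h p := by linarith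
    have h4 := mul_le_mul_of_nonneg_left h3 hq.le
    have : q * (p / q * h q) = p * h q := by field_simp
    linarith
  have hx : 0 ≤ h y := h0 y (by simpa using hy.le)
  have key : 0 ≤ (h y * b - y * h b) * (h b - h y) := by
    rcases le_total y b with hyb | hyb
    · have h1 := star y b hy.le hyb (hy.trans_le hyb)
      have h2 := hm (by simpa using hy.le) (by simpa using hb) hyb
      exact mul_nonneg (by linarith) (by linarith)
    · have h1 := star b y hb hyb hy
      have h2 := hm (by simpa using hb) (by simpa using hy.le) hyb
      exact mul_nonneg_of_nonpos_of_nonpos (by linarith) (by linarith)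
  nlinarith [mul_nonneg hy.le (sq_nonneg (h b - h y))]

lemma aux_ivt {h : ℝ → ℝ} (hm : MonotoneOn h (Set.Ici 0)) (hc : ConcaveOn ℝ (Set.Ici 0) h)
    {t z : ℝ} (ht : 0 < t) (hM : 0 < h t) (hz : 0 < z) :
    ∃ y, 0 < y ∧ 0 < h y ∧ h y * y = z := by
  have hzM : 0 < z / h t := by positivity
  have hp : 0 < min t (z / h t) := lt_min ht hzM
  have hcont : ContinuousOn (fun y => h y * y) (Set.Icc (min t (z / h t)) (max t (z / h t))) := by
    refine ContinuousOn.mul (hc.continuousOn_interior.mono ?_) continuousOn_id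
    intro u hu
    rw [interior_Ici]
    exact hp.trans_le hu.1
  have hq : t ≤ max t (z / h t) := le_max_left _ _
  have h1 : h (min t (z / h t)) * min t (z / h t) ≤ z := by
    have a1 := hm (by simpa using hp.le) (by simpa using ht.le) (min_le_left t (z / h t))
    calc _ ≤ h t * (z / h t) := mul_le_mul a1 (min_le_right _ _) hp.le hM.le
      _ = z := by field_simp
  have h2 : z ≤ h (max t (z / h t)) * max t (z / h t) := by
    have a1 := hm (by simpa using ht.le) (by simpa using (ht.trans_le hq).le) hq
    calc z = h t * (z / h t) := by field_simp
      _ ≤ _ := mul_le_mul a1 (le_max_right _ _) hzM.le (hM.le.trans a1)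
  obtain ⟨y, hy, hyz⟩ := intermediate_value_Icc (min_le_max) hcont ⟨h1, h2⟩
  have hy0 : 0 < y := hp.trans_le hy.1
  refine ⟨y, hy0, ?_, hyz⟩
  simp only at hyz
  by_contra hneg
  nlinarith [mul_nonneg (sub_nonneg.2 (not_lt.1 hneg)) hy0.le]

open Unitary in
lemma aux_decomp {n d : ℕ} (B : Matrix (Fin n) (Fin n) ℂ) (h : ℝ → ℝ) (hB : B.PosSemidef)
    (Φ : Matrix (Fin n) (Fin n) ℂ →ₗ[ℂ] Matrix (Fin d) (Fin d) ℂ)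
    (hΦ1 : Φ 1 = 1) (hΦpos : ∀ X : Matrix (Fin n) (Fin n) ℂ, X.PosSemidef → (Φ X).PosSemidef) :
    ∃ (b : Fin n → ℝ) (M : Fin n → Matrix (Fin d) (Fin d) ℂ), (∀ i, 0 ≤ b i) ∧
      (∀ i, (M i).PosSemidef) ∧ ∑ i, M i = 1 ∧ Φ (cfc h B) = ∑ i, (h (b i) : ℂ) • M i ∧
      Φ B = ∑ i, (b i : ℂ) • M i ∧ Φ (cfc h B * B) = ∑ i, ((h (b i) * b i : ℝ) : ℂ) • M i := by
  have hH := hB.isHermitian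
  let T := conjStarAlgAut ℂ (Matrix (Fin n) (Fin n) ℂ) hH.eigenvectorUnitary
  have hT : ∀ f : Fin n → ℂ, Φ (T (Matrix.diagonal f)) =
      ∑ i, f i • Φ (T (Matrix.diagonal (Pi.single i 1))) := by
    intro f
    have : Matrix.diagonal f = ∑ i, f i • Matrix.diagonal (Pi.single i (1 : ℂ)) := by
      ext a c
      simp [Matrix.sum_apply, Matrix.diagonal_apply, Pi.single_apply]
    rw [this]
    simp only [map_sum, map_smul]
  have hBT : B = T (Matrix.diagonal (fun i => (hH.eigenvalues i : ℂ))) := hH.spectral_theorem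
  have hAT : cfc h B = T (Matrix.diagonal (fun i => (h (hH.eigenvalues i) : ℂ))) := hH.cfc_eq h
  refine ⟨hH.eigenvalues, fun i => Φ (T (Matrix.diagonal (Pi.single i 1))),
    hB.eigenvalues_nonneg, ?_, ?_, ?_, ?_, ?_⟩
  · intro i
    apply hΦpos
    have hd : (Matrix.diagonal (Pi.single i (1 : ℂ))).PosSemidef :=
      Matrix.PosSemidef.diagonal (by rw [Pi.single_nonneg]; exact zero_le_one)
    have := hd.mul_mul_conjTranspose_same (hH.eigenvectorUnitary : Matrix (Fin n) (Fin n) ℂ)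
    simpa [T, conjStarAlgAut_apply, Matrix.star_eq_conjTranspose] using this
  · have := hT (fun _ => 1)
    simp only [one_smul] at this
    rw [← this]
    simp [hΦ1]
  · rw [hAT, hT]
  · conv_lhs => rw [hBT]
    rw [hT]
  · conv_lhs => rw [hAT]
    conv_lhs => enter [2, 2]; rw [hBT]
    rw [← map_mul, Matrix.diagonal_mul_diagonal, hT]
    simp

lemma aux_T1 {n d : ℕ} (b a : Fin n → ℝ) (M : Fin n → Matrix (Fin d) (Fin d) ℂ)
    (hM : ∀ i, (M i).PosSemidef) (h1 : ∑ i, M i = 1) {x y : ℝ} (hy : 0 ≤ y)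
    (hab : ∀ i, 0 ≤ 2 * x * (a i * b i) - y * a i ^ 2 - 2 * x ^ 2 * b i + x ^ 2 * y)
    {X Y Z : Matrix (Fin d) (Fin d) ℂ} (hX : X = ∑ i, (a i : ℂ) • M i)
    (hY : Y = ∑ i, (b i : ℂ) • M i) (hZ : Z = ∑ i, ((a i * b i : ℝ) : ℂ) • M i) :
    ((2 * x : ℂ) • Z - (y : ℂ) • (X * X) - (2 * x ^ 2 : ℂ) • Y +
      (x ^ 2 * y : ℂ) • (1 : Matrix (Fin d) (Fin d) ℂ)).PosSemidef := by
  have hXH : Xᴴ = X := by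
    rw [hX, Matrix.conjTranspose_sum]
    refine Finset.sum_congr rfl fun i _ => ?_
    rw [Matrix.conjTranspose_smul, (hM i).isHermitian.eq]; simp
  have e : (2 * x : ℂ) • Z - (y : ℂ) • (X * X) - (2 * x ^ 2 : ℂ) • Y +
      (x ^ 2 * y : ℂ) • (1 : Matrix (Fin d) (Fin d) ℂ) =
      ∑ i, (((2 * x * (a i * b i) - y * a i ^ 2 - 2 * x ^ 2 * b i + x ^ 2 * y : ℝ) : ℂ) • M i) +
      (y : ℂ) • ∑ i, ((a i : ℂ) • 1 - X)ᴴ * M i * ((a i : ℂ) • 1 - X) := by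
    have e1 : ∑ i, ((a i : ℂ) • 1 - X)ᴴ * M i * ((a i : ℂ) • 1 - X) =
        ∑ i, (((a i ^ 2 : ℝ) : ℂ) • M i) - X * X := by
      have : ∀ i, ((a i : ℂ) • 1 - X)ᴴ * M i * ((a i : ℂ) • 1 - X) =
        ((a i ^ 2 : ℝ) : ℂ) • M i - X * ((a i : ℂ) • M i) - ((a i : ℂ) • M i) * X
          + X * M i * X := by
        intro i
        rw [Matrix.conjTranspose_sub, hXH, Matrix.conjTranspose_smul]
        have hst : star (a i : ℂ) = (a i : ℂ) := Complex.conj_ofReal _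
        rw [hst, Matrix.conjTranspose_one]
        simp only [sub_mul, mul_sub, smul_mul_assoc, mul_smul_comm, one_mul, mul_one]
        push_cast
        module
      simp only [this, Finset.sum_add_distrib, Finset.sum_sub_distrib, ← Finset.mul_sum,
        ← Finset.sum_mul, ← hX, h1]
      simp
    rw [e1, hY, hZ, ← h1, smul_sub]
    simp only [Finset.smul_sum, smul_smul]
    have : ∀ S T U V W R : Matrix (Fin d) (Fin d) ℂ, S - T - U + V = (R) + (W - T) ↔ S - U + V - W = R := by
      intro S T U V W R
      constructor
      · intro h
        have h' : S - U + V - W = (S - T - U + V) - (W - T) := by abel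
        rw [h', h]; abel
      · rintro rfl
        abel
    rw [this, ← Finset.sum_sub_distrib, ← Finset.sum_add_distrib, ← Finset.sum_sub_distrib]
    refine Finset.sum_congr rfl fun i _ => ?_
    push_cast
    module
  rw [e]
  refine Matrix.PosSemidef.add (Matrix.posSemidef_sum _ fun i _ => ?_) ?_
  · exact (hM i).smul (by exact_mod_cast hab i)
  · refine Matrix.PosSemidef.smul (Matrix.posSemidef_sum _ fun i _ => ?_) (by exact_mod_cast hy)
    exact (hM i).conjTranspose_mul_mul_same _

lemma aux_T {d : ℕ} {X Y Z : Matrix (Fin d) (Fin d) ℂ} (hY : Y.PosSemidef) {x y : ℝ} (hy : 0 ≤ y)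
    (hT : ((2 * x : ℂ) • Z - (y : ℂ) • (X * X) - (2 * x ^ 2 : ℂ) • Y +
      (x ^ 2 * y : ℂ) • (1 : Matrix (Fin d) (Fin d) ℂ)).PosSemidef) :
    ((2 * x : ℂ) • (Y * Z * Y) - (2 * x * (x * y) : ℂ) • (Y * Y) - (y : ℂ) • (Y * X * X * Y) +
      (x ^ 2 * y ^ 3 : ℂ) • (1 : Matrix (Fin d) (Fin d) ℂ)).PosSemidef := by
  have h1 := hT.conjTranspose_mul_mul_same Y
  have h2 : ((2 : ℂ) • Y + (y : ℂ) • (1 : Matrix (Fin d) (Fin d) ℂ)).PosSemidef :=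
    (hY.smul (by norm_num)).add (Matrix.PosSemidef.one.smul (by exact_mod_cast hy))
  have h3 := (h2.conjTranspose_mul_mul_same (Y - (y : ℂ) • 1)).smul
    (show (0 : ℂ) ≤ ((x ^ 2 : ℝ) : ℂ) by exact_mod_cast sq_nonneg x)
  have h4 := h1.add h3
  convert h4 using 1
  rw [Matrix.conjTranspose_sub, Matrix.conjTranspose_smul, hY.isHermitian.eq]
  simp [sub_mul, mul_sub, mul_add, add_mul, smul_smul, smul_sub, smul_add, ← mul_assoc]
  module

open Unitary in
lemma aux_quad {d : ℕ} (U : Matrix.unitaryGroup (Fin d) ℂ) (g : Fin d → ℝ) (w : Fin d → ℂ) :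
    (star w ⬝ᵥ (conjStarAlgAut ℂ (Matrix (Fin d) (Fin d) ℂ) U
      (Matrix.diagonal (fun i => (g i : ℂ)))) *ᵥ w).re =
    ∑ i, g i * Complex.normSq (((star U : Matrix (Fin d) (Fin d) ℂ) *ᵥ w) i) := by
  rw [conjStarAlgAut_apply, ← Matrix.mulVec_mulVec, ← Matrix.mulVec_mulVec,
    Matrix.dotProduct_mulVec]
  have : star w ᵥ* (U : Matrix (Fin d) (Fin d) ℂ) =
      star ((star U : Matrix (Fin d) (Fin d) ℂ) *ᵥ w) := by
    rw [Matrix.star_mulVec]; simp [Matrix.star_eq_conjTranspose]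
  rw [this]
  generalize (star U : Matrix (Fin d) (Fin d) ℂ) *ᵥ w = c
  simp only [dotProduct, Matrix.mulVec_diagonal, Complex.re_sum, Pi.star_apply]
  refine Finset.sum_congr rfl fun i _ => ?_
  simp [Complex.normSq_apply]
  ring

lemma aux_card_ge {d : ℕ} {X : Matrix (Fin d) (Fin d) ℂ} (hX : X.IsHermitian) (j : Fin d) {s : ℝ}
    (hs : s ≤ eigDesc X j) :
    (j : ℕ) + 1 ≤ (Finset.univ.filter fun i => s ≤ hX.eigenvalues i).card := by
  rw [eigDesc, dif_pos hX] at hs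
  have hsub : (Finset.Ici j.rev).map (Tuple.sort hX.eigenvalues).toEmbedding ⊆
      Finset.univ.filter fun i => s ≤ hX.eigenvalues i := by
    intro i hi
    simp only [Finset.mem_map, Finset.mem_Ici, Equiv.coe_toEmbedding] at hi
    obtain ⟨l, hl, rfl⟩ := hi
    simp only [Finset.mem_filter, Finset.mem_univ, true_and]
    exact hs.trans (Tuple.monotone_sort hX.eigenvalues hl)
  have := Finset.card_le_card hsub
  rw [Finset.card_map, Fin.card_Ici, Fin.val_rev] at this
  omega

lemma aux_card_le {d : ℕ} {X : Matrix (Fin d) (Fin d) ℂ} (hX : X.IsHermitian) (j : Fin d) {s : ℝ}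
    (hs : eigDesc X j < s) :
    (Finset.univ.filter fun i => s ≤ hX.eigenvalues i).card ≤ (j : ℕ) := by
  rw [eigDesc, dif_pos hX] at hs
  have hsub : (Finset.univ.filter fun i => s ≤ hX.eigenvalues i) ⊆ 
      (Finset.Ioi j.rev).map (Tuple.sort hX.eigenvalues).toEmbedding := by
    intro i hi
    simp only [Finset.mem_filter, Finset.mem_univ, true_and] at hi
    simp only [Finset.mem_map, Finset.mem_Ioi, Equiv.coe_toEmbedding]
    refine ⟨(Tuple.sort hX.eigenvalues).symm i, ?_, by simp⟩
    by_contra hcon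
    have := Tuple.monotone_sort hX.eigenvalues (not_lt.1 hcon)
    simp only [Function.comp_apply, Equiv.apply_symm_apply] at this hs
    linarith
  have := Finset.card_le_card hsub
  rw [Finset.card_map, Fin.card_Ioi, Fin.val_rev] at this
  omega

lemma aux_minmax {d : ℕ} {P Z : Matrix (Fin d) (Fin d) ℂ} (hP : P.IsHermitian)
    (hZ : Z.IsHermitian) (Y : Matrix (Fin d) (Fin d) ℂ) (j : Fin d) {s z : ℝ} (hs0 : 0 ≤ s)
    (hs : s ≤ eigDesc P j) (hz : eigDesc Z j < z) :
    ∃ w : Fin d → ℂ, w ≠ 0 ∧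
      s ^ 2 * (star w ⬝ᵥ w).re ≤ (star w ⬝ᵥ (P * P) *ᵥ w).re ∧
      (star (Y *ᵥ w) ⬝ᵥ Z *ᵥ (Y *ᵥ w)).re ≤ z * (star (Y *ᵥ w) ⬝ᵥ (Y *ᵥ w)).re := by
  have c1 := aux_card_ge hP j hs
  have c2 := aux_card_le hZ j hz
  let S := {i // s ≤ hP.eigenvalues i}
  let K := {i // z ≤ hZ.eigenvalues i}
  let U : Matrix (Fin d) (Fin d) ℂ := hP.eigenvectorUnitary
  let V : Matrix (Fin d) (Fin d) ℂ := star (hZ.eigenvectorUnitary : Matrix (Fin d) (Fin d) ℂ)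
  let E : (S → ℂ) →ₗ[ℂ] (Fin d → ℂ) := Function.ExtendByZero.linearMap ℂ (Subtype.val : S → Fin d)
  let F : (Fin d → ℂ) →ₗ[ℂ] (K → ℂ) := LinearMap.funLeft ℂ ℂ (Subtype.val : K → Fin d)
  let L : (S → ℂ) →ₗ[ℂ] (K → ℂ) := F ∘ₗ (V * Y * U).mulVecLin ∘ₗ E
  have hker : LinearMap.ker L ≠ ⊥ := by
    apply LinearMap.ker_ne_bot_of_finrank_lt
    rw [Module.finrank_fintype_fun_eq_card, Module.finrank_fintype_fun_eq_card,
      Fintype.card_subtype, Fintype.card_subtype]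
    omega
  obtain ⟨c, hc, hc0⟩ := (Submodule.ne_bot_iff _).1 hker
  have hUU : star U * U = 1 := Unitary.coe_star_mul_self hP.eigenvectorUnitary
  have hw : star U *ᵥ (U *ᵥ E c) = E c := by rw [Matrix.mulVec_mulVec, hUU, Matrix.one_mulVec]
  have hone : ∀ (W : Matrix.unitaryGroup (Fin d) ℂ) (w : Fin d → ℂ), (star w ⬝ᵥ w).re =
      ∑ i, Complex.normSq (((star W : Matrix (Fin d) (Fin d) ℂ) *ᵥ w) i) := by
    intro W w
    have := aux_quad W (fun _ => 1) w
    simpa using this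
  refine ⟨U *ᵥ E c, ?_, ?_, ?_⟩
  · intro h0
    rw [h0, Matrix.mulVec_zero] at hw
    apply hc0
    ext i
    have h1 : E c i.1 = c i := Subtype.val_injective.extend_apply c 0 i
    rw [← h1, ← hw]; rfl
  · have hPP : P * P = Unitary.conjStarAlgAut ℂ (Matrix (Fin d) (Fin d) ℂ) hP.eigenvectorUnitary
      (Matrix.diagonal (fun i => ((hP.eigenvalues i ^ 2 : ℝ) : ℂ))) := by
      conv_lhs => rw [hP.spectral_theorem]
      rw [← map_mul, Matrix.diagonal_mul_diagonal]
      simp [pow_two]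
    rw [hPP, aux_quad, hone hP.eigenvectorUnitary, Finset.mul_sum]
    refine Finset.sum_le_sum fun i _ => ?_
    change _ * Complex.normSq ((star U *ᵥ _) i) ≤ _ * Complex.normSq ((star U *ᵥ _) i)
    rw [hw]
    by_cases hi : s ≤ hP.eigenvalues i
    · exact mul_le_mul_of_nonneg_right (pow_le_pow_left₀ hs0 hi 2) (Complex.normSq_nonneg _)
    · have : E c i = 0 := by
        refine Function.extend_apply' _ _ _ ?_
        rintro ⟨a, rfl⟩
        exact hi a.2
      simp [this]
  · have hq := aux_quad hZ.eigenvectorUnitary hZ.eigenvalues (Y *ᵥ (U *ᵥ E c))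
    have hsp := hZ.spectral_theorem
    change Z = Unitary.conjStarAlgAut ℂ (Matrix (Fin d) (Fin d) ℂ) hZ.eigenvectorUnitary
      (Matrix.diagonal (fun i => (hZ.eigenvalues i : ℂ))) at hsp
    rw [← hsp] at hq
    rw [hq, hone hZ.eigenvectorUnitary, Finset.mul_sum]
    refine Finset.sum_le_sum fun i _ => ?_
    by_cases hi : z ≤ hZ.eigenvalues i
    · have h1 : L c ⟨i, hi⟩ = 0 := by rw [LinearMap.mem_ker.1 hc]; rfl
      have h2 : (V *ᵥ (Y *ᵥ (U *ᵥ E c))) i = 0 := by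
        rw [Matrix.mulVec_mulVec, Matrix.mulVec_mulVec]; exact h1
      change _ * Complex.normSq ((V *ᵥ _) i) ≤ _ * Complex.normSq ((V *ᵥ _) i)
      rw [h2]; simp
    · exact mul_le_mul_of_nonneg_right (not_le.1 hi).le (Complex.normSq_nonneg _)

lemma aux_eig_nonneg {d : ℕ} {X : Matrix (Fin d) (Fin d) ℂ} (hX : X.PosSemidef) (j : Fin d) :
    0 ≤ eigDesc X j := by
  rw [eigDesc, dif_pos hX.isHermitian]
  exact hX.eigenvalues_nonneg _

open scoped MatrixOrder in
lemma aux_matAbs {d : ℕ} (X : Matrix (Fin d) (Fin d) ℂ) :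
    (matAbs X).PosSemidef ∧ matAbs X * matAbs X = Xᴴ * X := by
  have hp := Matrix.posSemidef_conjTranspose_mul_self X
  have hsa : IsSelfAdjoint (Xᴴ * X) := hp.isHermitian
  constructor
  · rw [← Matrix.nonneg_iff_posSemidef]
    exact cfc_nonneg fun x _ => Real.sqrt_nonneg x
  · rw [matAbs, ← cfc_mul Real.sqrt Real.sqrt (Xᴴ * X) (by fun_prop) (by fun_prop)]
    conv_rhs => rw [← cfc_id' ℝ (Xᴴ * X) hsa]
    refine cfc_congr fun x hx => ?_
    exact Real.mul_self_sqrt (spectrum_nonneg_of_nonneg hp.nonneg hx)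

/-- For a concave monotone pair `(A, B)` and a unital positive linear map `Φ`, the matrix
`|Φ(A) Φ(B)|` is weakly log-majorized by `Φ(AB)`. -/
theorem concave_pair_weak_log_majorization {n d : ℕ} (A B : Matrix (Fin n) (Fin n) ℂ)
    (hAB : ConcaveMonotonePair A B)
    (Φ : Matrix (Fin n) (Fin n) ℂ →ₗ[ℂ] Matrix (Fin d) (Fin d) ℂ)
    (hΦ1 : Φ 1 = 1) (hΦpos : ∀ X : Matrix (Fin n) (Fin n) ℂ, X.PosSemidef → (Φ X).PosSemidef)
    (k : ℕ) :
    ∏ j ∈ Finset.univ.filter (fun j : Fin d => (j : ℕ) < k), eigDesc (matAbs (Φ A * Φ B)) j ≤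
      ∏ j ∈ Finset.univ.filter (fun j : Fin d => (j : ℕ) < k), eigDesc (Φ (A * B)) j := by
  obtain ⟨h, hB, hm, hc, h0, rfl⟩ := hAB
  obtain ⟨b, M, hb, hM, hM1, hX, hY, hZ⟩ := aux_decomp B h hB Φ hΦ1 hΦpos
  obtain ⟨hPp, hPP⟩ := aux_matAbs (Φ (cfc h B) * Φ B)
  have hYp : (Φ B).PosSemidef := hΦpos B hB
  have hXp : (Φ (cfc h B)).PosSemidef := by
    rw [hX]
    exact Matrix.posSemidef_sum _ fun i _ => (hM i).smul (by exact_mod_cast h0 _ (hb i))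
  have hZp : (Φ (cfc h B * B)).PosSemidef := by
    rw [hZ]
    exact Matrix.posSemidef_sum _ fun i _ =>
      (hM i).smul (by exact_mod_cast mul_nonneg (h0 _ (hb i)) (hb i))
  refine Finset.prod_le_prod (fun j _ => aux_eig_nonneg hPp j) fun j _ => ?_
  generalize Φ (cfc h B) = X at *
  generalize Φ B = Y at *
  generalize Φ (cfc h B * B) = Z at *
  generalize matAbs (X * Y) = P at *
  have hXY : (X * Y)ᴴ * (X * Y) = Y * X * X * Y := by
    rw [Matrix.conjTranspose_mul, hXp.isHermitian.eq, hYp.isHermitian.eq]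
    simp only [mul_assoc]
  by_contra hcon
  rw [not_le] at hcon
  obtain ⟨z, hz1, hz2⟩ := exists_between hcon
  have hz : 0 < z := (aux_eig_nonneg hZp j).trans_lt hz1
  obtain ⟨w, hw0, hw1, hw2⟩ := aux_minmax hPp.isHermitian hZp.isHermitian Y j (hz.trans hz2).le
    le_rfl hz1
  have hww : 0 < (star w ⬝ᵥ w).re := by
    have := Matrix.dotProduct_star_self_pos_iff.2 hw0
    have h1 := (Complex.pos_iff.1 this).1
    first | exact h1 | (rw [dotProduct_comm]; exact h1)
  rw [hPP, hXY] at hw1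
  suffices hs : (star w ⬝ᵥ (Y * X * X * Y) *ᵥ w).re ≤ z ^ 2 * (star w ⬝ᵥ w).re by
    have h1 := le_of_mul_le_mul_right (hw1.trans hs) hww
    nlinarith
  by_cases hex : ∃ t, 0 < t ∧ 0 < h t
  · obtain ⟨t, ht, hht⟩ := hex
    obtain ⟨y, hy, hx, hyz⟩ := aux_ivt hm hc ht hht hz
    have hT1 := aux_T1 b (fun i => h (b i)) M hM hM1 hy.le
      (fun i => aux_scalar hm hc h0 hy (hb i)) hX hY hZ
    have hT := (aux_T hYp hy.le hT1).dotProduct_mulVec_nonneg w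
    have hre := (Complex.nonneg_iff.1 hT).1
    have eZ : star w ⬝ᵥ (Y * Z * Y) *ᵥ w = star (Y *ᵥ w) ⬝ᵥ Z *ᵥ (Y *ᵥ w) := by
      rw [Matrix.star_mulVec, hYp.isHermitian.eq, ← Matrix.dotProduct_mulVec]
      simp [Matrix.mulVec_mulVec, mul_assoc]
    have eY : star w ⬝ᵥ (Y * Y) *ᵥ w = star (Y *ᵥ w) ⬝ᵥ (Y *ᵥ w) := by
      rw [Matrix.star_mulVec, hYp.isHermitian.eq, ← Matrix.dotProduct_mulVec]
      simp [Matrix.mulVec_mulVec]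
    rw [← eZ, ← eY] at hw2
    simp only [Matrix.add_mulVec, Matrix.sub_mulVec, Matrix.smul_mulVec, dotProduct_add,
      dotProduct_sub, dotProduct_smul, Matrix.one_mulVec, smul_eq_mul] at hre
    generalize star w ⬝ᵥ (Y * Z * Y) *ᵥ w = q1 at *
    generalize star w ⬝ᵥ (Y * Y) *ᵥ w = q2 at *
    generalize star w ⬝ᵥ (Y * X * X * Y) *ᵥ w = q3 at *
    generalize star w ⬝ᵥ w = q4 at *
    have hre' : 0 ≤ 2 * h y * q1.re - 2 * h y * (h y * y) * q2.re - y * q3.re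
        + h y ^ 2 * y ^ 3 * q4.re := by
      have c1 : (2 * (h y : ℂ)) = ((2 * h y : ℝ) : ℂ) := by push_cast; ring
      have c2 : (2 * (h y : ℂ) * (h y * y)) = ((2 * h y * (h y * y) : ℝ) : ℂ) := by push_cast; ring
      have c3 : ((h y : ℂ) ^ 2 * y ^ 3) = ((h y ^ 2 * y ^ 3 : ℝ) : ℂ) := by push_cast; ring
      rw [c2, c1, c3] at hre
      simpa only [Complex.add_re, Complex.sub_re, Complex.re_ofReal_mul] using hre
    rw [hyz] at hre'
    have h5 : h y ^ 2 * y ^ 3 = y * z ^ 2 := by rw [← hyz]; ring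
    rw [h5] at hre'
    have h6 := mul_le_mul_of_nonneg_left hw2 (show 0 ≤ 2 * h y by positivity)
    have h7 : y * q3.re ≤ y * (z ^ 2 * q4.re) := by linarith
    exact le_of_mul_le_mul_left h7 hy
  · have hz0 : ∀ i, h (b i) = 0 := by
      intro i
      have h1 : h (b i + 1) ≤ 0 := by
        by_contra hne
        exact hex ⟨b i + 1, by linarith [hb i], not_le.1 hne⟩
      have h2 := hm (by simpa using hb i) (by simpa using (by linarith [hb i] : 0 ≤ b i + 1))
        (by linarith : b i ≤ b i + 1)
      exact le_antisymm (h2.trans h1) (h0 _ (hb i))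
    have hX0 : X = 0 := by rw [hX]; simp [hz0]
    rw [hX0]
    simp only [mul_zero, zero_mul, Matrix.zero_mulVec, dotProduct_zero, Complex.zero_re]
    positivity
end

section
/- Let A, B be positive definite matrices with A ≥ B, and let p, r > 0. Then A^{-r} ♯_{r/(p+r)} B^p ≤ I, where ♯_α is the α-weighted geometric mean. -/
open scoped Matrix ComplexOrder

/-- The α-weighted matrix geometric mean `A ♯_α B = A^{1/2} (A^{-1/2} B A^{-1/2})^α A^{1/2}`. -/
noncomputable def geomMean {n : ℕ} (α : ℝ) (A B : Matrix (Fin n) (Fin n) ℂ) :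
    Matrix (Fin n) (Fin n) ℂ :=
  mpow A (1 / 2) * mpow (mpow A (-(1 / 2)) * B * mpow A (-(1 / 2))) α * mpow A (1 / 2)

section CStar

variable {R : Type*} [CStarAlgebra R] [PartialOrder R] [StarOrderedRing R]

lemma fk_sp_conj {c b : R} (hc : IsStrictlyPositive c) (hb : IsStrictlyPositive b) :
    IsStrictlyPositive (c * b * c) := by
  have := (hc.isUnit.isStrictlyPositive_star_right_conjugate_iff (a := b)).2 hb
  rwa [hc.isSelfAdjoint.star_eq] at this

lemma fk_rpow_unitary (U : unitary R) (a : R) (ha : IsStrictlyPositive a) (x : ℝ) :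
    ((U : R) * a * star (U : R)) ^ x = (U : R) * a ^ x * star (U : R) := by
  have h0 : 0 ≤ (U : R) * a * star (U : R) := star_right_conjugate_nonneg ha.nonneg _
  rw [CFC.rpow_eq_cfc_real h0, CFC.rpow_eq_cfc_real ha.nonneg]
  have hc : ContinuousOn (fun y : ℝ => y ^ x) (spectrum ℝ a) := fun y hy =>
    (Real.continuousAt_rpow_const y x (Or.inl (ha.spectrum_pos hy).ne')).continuousWithinAt
  have hcont : Continuous (Unitary.conjStarAlgAut ℝ R U) := by
    have : ⇑(Unitary.conjStarAlgAut ℝ R U) = fun y => (U : R) * y * star (U : R) := by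
      ext y; simp [Unitary.conjStarAlgAut_apply]
    rw [this]; fun_prop
  have := StarAlgHomClass.map_cfc (S := ℝ) (Unitary.conjStarAlgAut ℝ R U) (fun y : ℝ => y ^ x) a
    hc hcont ha.isSelfAdjoint (by
      rw [Unitary.conjStarAlgAut_apply]; exact IsSelfAdjoint.of_nonneg h0)
  simpa [Unitary.conjStarAlgAut_apply] using this.symm

lemma fk_polar (T : R) (hT : IsUnit T) (x : ℝ) :
    (T * star T) ^ x = T * (star T * T) ^ (x - 1) * star T := by
  set Q := star T * T with hQ
  have hQp : IsStrictlyPositive Q :=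
    (hT.star.mul hT).isStrictlyPositive (star_mul_self_nonneg T)
  have hsa : star (Q ^ (-(1/2) : ℝ)) = Q ^ (-(1/2) : ℝ) := CFC.rpow_nonneg.star_eq
  have hadd : ∀ a b : ℝ, Q ^ a * Q ^ b = Q ^ (a + b) := fun a b =>
    (CFC.rpow_add hQp.isUnit).symm
  have h1 : Q ^ (1 : ℝ) = Q := CFC.rpow_one Q hQp.nonneg
  have hUu : IsUnit (T * Q ^ (-(1/2) : ℝ)) := hT.mul (IsStrictlyPositive.rpow Q _ hQp).isUnit
  have hsu : star (T * Q ^ (-(1/2) : ℝ)) * (T * Q ^ (-(1/2) : ℝ)) = 1 := by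
    calc _ = Q ^ (-(1/2) : ℝ) * Q * Q ^ (-(1/2) : ℝ) := by
          rw [star_mul, hsa, hQ]; simp only [mul_assoc]
      _ = Q ^ (-(1/2) : ℝ) * Q ^ (1 : ℝ) * Q ^ (-(1/2) : ℝ) := by rw [h1]
      _ = 1 := by
          rw [hadd, hadd]; norm_num
          exact CFC.rpow_zero Q hQp.nonneg
  have hus : (T * Q ^ (-(1/2) : ℝ)) * star (T * Q ^ (-(1/2) : ℝ)) = 1 :=
    by
    obtain ⟨u, hu⟩ := hUu
    rw [← hu] at hsu ⊢
    rw [eq_comm, ← Units.inv_eq_of_mul_eq_one_left hsu, Units.mul_inv]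
  let U : unitary R := ⟨T * Q ^ (-(1/2) : ℝ), hsu, hus⟩
  have key : ∀ y : ℝ, (U : R) * Q ^ y * star (U : R) = T * Q ^ (y - 1) * star T := by
    intro y
    calc _ = T * (Q ^ (-(1/2) : ℝ) * Q ^ y * Q ^ (-(1/2) : ℝ)) * star T := by
          change T * Q ^ (-(1/2) : ℝ) * Q ^ y * star (T * Q ^ (-(1/2) : ℝ)) = _
          rw [star_mul, hsa]; simp only [mul_assoc]
      _ = _ := by rw [hadd, hadd]; ring_nf
  have hk1 := key 1
  rw [h1, sub_self, CFC.rpow_zero Q hQp.nonneg, mul_one] at hk1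
  rw [← hk1, fk_rpow_unitary U Q hQp, key]

/-- the key lemma -/
lemma fk_main {A B : R} (hB : IsStrictlyPositive B) (hBA : B ≤ A)
    {s p α : ℝ} (hs0 : 0 < s) (hs1 : s ≤ 1) (hp : 0 < p) (hα0 : 0 ≤ α) (hα1 : α ≤ 1) :
    (A ^ (s / 2) * B ^ p * A ^ (s / 2)) ^ α ≤
      A ^ (s / 2) * B ^ (α * (p + s) - s) * A ^ (s / 2) := by
  have hA : IsStrictlyPositive A := hB.of_le hBA
  have hAs : star (A ^ (s / 2)) = A ^ (s / 2) := CFC.rpow_nonneg.star_eq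
  have hBs : star (B ^ (p / 2)) = B ^ (p / 2) := CFC.rpow_nonneg.star_eq
  have haB : ∀ a b : ℝ, B ^ a * B ^ b = B ^ (a + b) := fun a b =>
    (CFC.rpow_add hB.isUnit).symm
  have haA : ∀ a b : ℝ, A ^ a * A ^ b = A ^ (a + b) := fun a b =>
    (CFC.rpow_add hA.isUnit).symm
  have hT : IsUnit (A ^ (s / 2) * B ^ (p / 2)) :=
    (IsStrictlyPositive.rpow A _ hA).isUnit.mul (IsStrictlyPositive.rpow B _ hB).isUnit
  have e1 : A ^ (s / 2) * B ^ p * A ^ (s / 2) =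
      (A ^ (s / 2) * B ^ (p / 2)) * star (A ^ (s / 2) * B ^ (p / 2)) := by
    rw [star_mul, hAs, hBs, show p = p / 2 + p / 2 by ring, ← haB]
    simp only [mul_assoc]; ring_nf
  have e2 : star (A ^ (s / 2) * B ^ (p / 2)) * (A ^ (s / 2) * B ^ (p / 2)) =
      B ^ (p / 2) * A ^ s * B ^ (p / 2) := by
    rw [star_mul, hAs, hBs]
    calc _ = B ^ (p / 2) * (A ^ (s / 2) * A ^ (s / 2)) * B ^ (p / 2) := by
          simp only [mul_assoc]
      _ = _ := by rw [haA]; ring_nf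
  rw [e1, fk_polar _ hT, e2, star_mul, hAs, hBs]
  have hle : B ^ (p + s) ≤ B ^ (p / 2) * A ^ s * B ^ (p / 2) := by
    have h := conjugate_le_conjugate_of_nonneg
      (CFC.rpow_le_rpow (p := s) ⟨hs0.le, hs1⟩ hBA) (CFC.rpow_nonneg (a := B) (y := p / 2))
    rw [haB, haB] at h
    convert h using 2
    ring
  have hle2 : (B ^ (p / 2) * A ^ s * B ^ (p / 2)) ^ (α - 1) ≤ B ^ ((p + s) * (α - 1)) := by
    have hps := IsStrictlyPositive.rpow B (p + s) hB
    have hX : IsStrictlyPositive (B ^ (p / 2) * A ^ s * B ^ (p / 2)) := hps.of_le hle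
    have h := CFC.rpow_le_rpow (p := 1 - α) ⟨by linarith, by linarith⟩ hle
    have h2 := CStarAlgebra.ringInverse_le_ringInverse h (IsStrictlyPositive.rpow _ _ hps)
    rw [CFC.inverse_eq_rpow_neg_one (IsStrictlyPositive.rpow _ _ hX),
      CFC.inverse_eq_rpow_neg_one (IsStrictlyPositive.rpow _ _ hps)] at h2
    rcases eq_or_ne α 1 with rfl | hne
    · simp [CFC.rpow_zero _ hX.nonneg, CFC.rpow_zero _ hB.nonneg]
    · have hne' : 1 - α ≠ 0 := sub_ne_zero.2 hne.symm
      rw [CFC.rpow_rpow _ _ _ hne' hX, CFC.rpow_rpow _ _ _ hne' hps,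
        CFC.rpow_rpow _ _ _ (by positivity) hB] at h2
      convert h2 using 2 <;> ring
  have h3 := conjugate_le_conjugate_of_nonneg
    (conjugate_le_conjugate_of_nonneg hle2 (CFC.rpow_nonneg (a := B) (y := p / 2)))
    (CFC.rpow_nonneg (a := A) (y := s / 2))
  rw [haB, haB] at h3
  convert h3 using 1
  · simp only [mul_assoc]
  · ring_nf

lemma fk_double {A B : R} (hB : IsStrictlyPositive B) (hBA : B ≤ A)
    {r p : ℝ} (hr : 0 < r) (hp : 0 < p)
    (h : (A ^ (r / 2) * B ^ p * A ^ (r / 2)) ^ (r / (p + r)) ≤ A ^ r) :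
    (A ^ (2 * r / 2) * B ^ p * A ^ (2 * r / 2)) ^ (2 * r / (p + 2 * r)) ≤ A ^ (2 * r) := by
  have hA : IsStrictlyPositive A := hB.of_le hBA
  have haA : ∀ a b : ℝ, A ^ a * A ^ b = A ^ (a + b) := fun a b =>
    (CFC.rpow_add hA.isUnit).symm
  set X := A ^ (r / 2) * B ^ p * A ^ (r / 2) with hX
  have hXp : IsStrictlyPositive X :=
    fk_sp_conj (IsStrictlyPositive.rpow A _ hA) (IsStrictlyPositive.rpow B _ hB)
  have hm := fk_main (IsStrictlyPositive.rpow X (r / (p + r)) hXp) h (s := 1) (p := (p + r) / r)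
    (α := 2 * r / (p + 2 * r)) one_pos le_rfl (by positivity) (by positivity)
    (by rw [div_le_one (by positivity)]; linarith)
  have e1 : (X ^ (r / (p + r))) ^ ((p + r) / r) = X := by
    rw [CFC.rpow_rpow _ _ _ (by positivity) hXp,
      show r / (p + r) * ((p + r) / r) = 1 by field_simp, CFC.rpow_one X hXp.nonneg]
  have e2 : 2 * r / (p + 2 * r) * ((p + r) / r + 1) - 1 = 1 := by field_simp; ring
  have e3 : (A ^ r) ^ ((1 : ℝ) / 2) = A ^ (r / 2) := by
    rw [CFC.rpow_rpow _ _ _ hr.ne' hA]; ring_nf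
  rw [e1, e2, e3, CFC.rpow_one _ CFC.rpow_nonneg] at hm
  have h2 := conjugate_le_conjugate_of_nonneg h (CFC.rpow_nonneg (a := A) (y := r / 2))
  rw [haA, haA] at h2
  have e4 : A ^ (r / 2) * X * A ^ (r / 2) = A ^ (2 * r / 2) * B ^ p * A ^ (2 * r / 2) := by
    rw [show 2 * r / 2 = r / 2 + r / 2 by ring, ← haA, hX]
    simp only [mul_assoc]
  rw [← e4]
  refine hm.trans (h2.trans (le_of_eq ?_))
  ring_nf

lemma fk_all {A B : R} (hB : IsStrictlyPositive B) (hBA : B ≤ A) {p : ℝ} (hp : 0 < p)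
    (k : ℕ) : ∀ r : ℝ, 0 < r → r ≤ 2 ^ k →
    (A ^ (r / 2) * B ^ p * A ^ (r / 2)) ^ (r / (p + r)) ≤ A ^ r := by
  have hA : IsStrictlyPositive A := hB.of_le hBA
  induction k with
  | zero =>
    intro r hr hr1
    have h := fk_main hB hBA (s := r) (p := p) (α := r / (p + r)) hr (by simpa using hr1) hp
      (by positivity) (by rw [div_le_one (by positivity)]; linarith)
    rw [show r / (p + r) * (p + r) - r = 0 by field_simp; ring, CFC.rpow_zero B hB.nonneg,
      mul_one, ← CFC.rpow_add hA.isUnit, add_halves] at h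
    exact h
  | succ k ih =>
    intro r hr hr1
    have h := fk_double hB hBA (half_pos hr) hp (ih (r / 2) (half_pos hr) (by
      rw [pow_succ] at hr1; linarith))
    rwa [show 2 * (r / 2) = r by ring] at h

lemma fk_final {A B : R} (hB : IsStrictlyPositive B) (hBA : B ≤ A) {p r : ℝ} (hp : 0 < p)
    (hr : 0 < r) :
    (A ^ (-r)) ^ ((1 : ℝ) / 2) * ((A ^ (-r)) ^ (-((1 : ℝ) / 2)) * B ^ p *
      (A ^ (-r)) ^ (-((1 : ℝ) / 2))) ^ (r / (p + r)) * (A ^ (-r)) ^ ((1 : ℝ) / 2) ≤ 1 := by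
  have hA : IsStrictlyPositive A := hB.of_le hBA
  obtain ⟨k, hk⟩ := pow_unbounded_of_one_lt r (one_lt_two)
  have h := conjugate_le_conjugate_of_nonneg (fk_all hB hBA hp k r hr hk.le)
    (CFC.rpow_nonneg (a := A) (y := -r / 2))
  rw [← CFC.rpow_add hA.isUnit, ← CFC.rpow_add hA.isUnit,
    show -r / 2 + r + -r / 2 = 0 by ring, CFC.rpow_zero A hA.nonneg] at h
  rw [CFC.rpow_rpow _ _ _ (neg_ne_zero.2 hr.ne') hA, CFC.rpow_rpow _ _ _ (neg_ne_zero.2 hr.ne') hA,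
    show -r * (1 / 2) = -r / 2 by ring, show -r * -(1 / 2) = r / 2 by ring]
  exact h

end CStar

open scoped MatrixOrder Matrix.Norms.L2Operator in
lemma fk_mpow_eq {n : ℕ} (A : Matrix (Fin n) (Fin n) ℂ) (hA : 0 ≤ A) (x : ℝ) :
    mpow A x = A ^ x :=
  (CFC.rpow_eq_cfc_real hA).symm

/-- If `A ≥ B > 0` and `p, r > 0`, then `A^{-r} ♯_{r/(p+r)} B^p ≤ I`. -/
theorem fujii_kamei_first {n : ℕ} (A B : Matrix (Fin n) (Fin n) ℂ)
    (hA : A.PosDef) (hB : B.PosDef) (hBA : loewnerLE B A) (p r : ℝ) (hp : 0 < p) (hr : 0 < r) :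
    loewnerLE (geomMean (r / (p + r)) (mpow A (-r)) (mpow B p)) 1 := by
  open scoped MatrixOrder Matrix.Norms.L2Operator in
  have h := fk_final hB.isStrictlyPositive (Matrix.le_iff.2 hBA) hp hr
  open scoped MatrixOrder Matrix.Norms.L2Operator in
  rw [geomMean, fk_mpow_eq A hA.isStrictlyPositive.nonneg,
    fk_mpow_eq B hB.isStrictlyPositive.nonneg, fk_mpow_eq _ CFC.rpow_nonneg,
    fk_mpow_eq _ CFC.rpow_nonneg,
    fk_mpow_eq _ (conjugate_nonneg_of_nonneg CFC.rpow_nonneg CFC.rpow_nonneg)]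
  exact Matrix.le_iff.1 h
end

section
/- Let A, B be positive definite matrices with A ≥ B, let r > 0 and p ≥ 1. Then A^{-r} ♯_{(1+r)/(p+r)} B^p ≤ B ≤ A. (Fujii–Kamei lemma) -/
open scoped Matrix ComplexOrder

section Generic
open CFC

variable {E : Type*} [CStarAlgebra E] [PartialOrder E] [StarOrderedRing E]

theorem fk_rpow_rpow {a : E} (ha : IsStrictlyPositive a) (x y : ℝ) :
    (a ^ x) ^ y = a ^ (x * y) := by
  by_cases hx : x = 0
  · subst hx
    rw [zero_mul, CFC.rpow_zero a ha.nonneg, CFC.one_rpow]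
  · exact CFC.rpow_rpow a x y hx ha

theorem fk_sa {a : E} (x : ℝ) : star (a ^ x) = a ^ x :=
  (IsSelfAdjoint.of_nonneg (CFC.rpow_nonneg (a := a) (y := x))).star_eq

theorem fk_unitary (u : unitary E) {a : E} (ha : IsStrictlyPositive a) (s : ℝ) :
    ((u : E) * a * star (u : E)) ^ s = u * a ^ s * star (u : E) := by
  have h0 : (0 : E) ≤ (u : E) * a * star (u : E) := star_right_conjugate_nonneg ha.nonneg _
  rw [CFC.rpow_eq_cfc_real h0, CFC.rpow_eq_cfc_real ha.nonneg]
  have h1 := StarAlgHomClass.map_cfc (S := ℝ) (Unitary.conjStarAlgAut ℝ E u) (fun x : ℝ => x ^ s) a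
    (by
      have : (0 : ℝ) ∉ spectrum ℝ a := spectrum.zero_notMem _ ha.isUnit
      refine ContinuousOn.rpow_const continuousOn_id fun x hx => Or.inl ?_
      rintro rfl
      exact this hx)
    (by
      have : (fun x => Unitary.conjStarAlgAut ℝ E u x) = fun x : E => (u : E) * x * star (u : E) := by
        ext x; simp
      change Continuous (fun x => Unitary.conjStarAlgAut ℝ E u x)
      rw [this]; fun_prop)
    (IsSelfAdjoint.of_nonneg ha.nonneg)
    (by simpa using IsSelfAdjoint.of_nonneg h0)
  simpa using h1.symm

theorem fk_star_mul_pos {t : E} (ht : IsUnit t) : IsStrictlyPositive (star t * t) :=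
  (ht.star.mul ht).isStrictlyPositive (star_mul_self_nonneg t)

/-- `(t*t)^α = t* (tt*)^{α-1} t` for invertible `t`. -/
theorem fk_polar_s18 {t : E} (ht : IsUnit t) (α : ℝ) :
    (star t * t) ^ α = star t * (t * star t) ^ (α - 1) * t := by
  have hR := fk_star_mul_pos ht
  set R := star t * t with hRdef
  have e1 : R ^ (-(1/2) : ℝ) * R ^ (1/2 : ℝ) = 1 := CFC.rpow_neg_mul_rpow _ hR
  have e2 : R ^ (1/2 : ℝ) * R ^ (-(1/2) : ℝ) = 1 := CFC.rpow_mul_rpow_neg _ hR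
  have e3 : R ^ (1/2 : ℝ) * R ^ (1/2 : ℝ) = R := by
    rw [← CFC.rpow_add hR.isUnit]; norm_num; exact CFC.rpow_one R hR.nonneg
  set K := R ^ (1/2 : ℝ) with hK
  set L := R ^ (-(1/2) : ℝ) with hL
  have sK : star K = K := fk_sa _
  have sL : star L = L := fk_sa _
  have u1 : star (t * L) * (t * L) = 1 := by
    calc star (t * L) * (t * L) = L * (star t * t) * L := by
          rw [star_mul, sL]; simp only [mul_assoc]
      _ = (L * K) * (K * L) := by rw [← hRdef, ← e3]; simp only [mul_assoc]
      _ = 1 := by rw [e1, e2, one_mul]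
  have hLu : IsUnit L := ⟨⟨L, K, e1, e2⟩, rfl⟩
  have u2 : (t * L) * star (t * L) = 1 := by
    have hu : IsUnit (t * L) := ht.mul hLu
    obtain ⟨v, hv⟩ := hu
    rw [← hv] at u1 ⊢
    rw [← Units.inv_eq_of_mul_eq_one_left u1, Units.mul_inv]
  let u : unitary E := ⟨t * L, Unitary.mem_iff.2 ⟨u1, u2⟩⟩
  have hu : (u : E) = t * L := rfl
  have htu : t = u * K := by rw [hu, mul_assoc, e1, mul_one]
  have hS : t * star t = u * R * star (u : E) := by
    conv_lhs => rw [htu]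
    rw [star_mul, sK, ← e3]; simp only [mul_assoc]
  have us : star (u : E) * u = 1 := u1
  rw [hS, fk_unitary u hR]
  have hst : star t = K * star (u : E) := by
    conv_lhs => rw [htu]
    rw [star_mul, sK]
  have : star t * (↑u * R ^ (α - 1) * star (u : E)) * t = K * R ^ (α - 1) * K := by
    rw [hst]
    conv_lhs => rw [htu]
    calc _ = K * (star (u : E) * u) * R ^ (α - 1) * (star (u : E) * u) * K := by
          simp only [mul_assoc]
      _ = _ := by rw [us]; simp only [mul_one]
  rw [this, hK, ← CFC.rpow_add hR.isUnit, ← CFC.rpow_add hR.isUnit]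
  congr 1; ring

theorem fk_antitone {a b : E} (ha : IsStrictlyPositive a) (hab : a ≤ b) {s : ℝ}
    (h1 : -1 ≤ s) (h0 : s ≤ 0) : b ^ s ≤ a ^ s := by
  have hb : IsStrictlyPositive b := ha.of_le hab
  have h := CStarAlgebra.ringInverse_le_ringInverse hab ha
  rw [CFC.inverse_eq_rpow_neg_one ha, CFC.inverse_eq_rpow_neg_one hb] at h
  have := CFC.rpow_le_rpow (p := -s) ⟨by linarith, by linarith⟩ h
  rw [fk_rpow_rpow ha, fk_rpow_rpow hb] at this
  simpa using this

/-- Conjugation by powers. -/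
theorem fk_conj {a b : E} (h : a ≤ b) (c : E) (x : ℝ) :
    c ^ x * a * c ^ x ≤ c ^ x * b * c ^ x :=
  IsSelfAdjoint.conjugate_le_conjugate h (fk_sa x)

theorem fk_conj_pos {a c : E} (ha : IsStrictlyPositive a) (hc : IsStrictlyPositive c) (x : ℝ) :
    IsStrictlyPositive (c ^ x * a * c ^ x) := by
  have hu := (hc.isUnit.cfcRpow x hc.nonneg)
  exact ((hu.mul ha.isUnit).mul hu).isStrictlyPositive
    (IsSelfAdjoint.conjugate_nonneg ha.nonneg (fk_sa x))

/-- The statement for a given `r`. -/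
def FK (E : Type*) [CStarAlgebra E] [PartialOrder E] [StarOrderedRing E] (r : ℝ) : Prop :=
  ∀ a b : E, IsStrictlyPositive b → b ≤ a → ∀ p : ℝ, 1 ≤ p →
    a ^ (-(r/2)) * (a ^ (r/2) * b ^ p * a ^ (r/2)) ^ ((1 + r) / (p + r)) * a ^ (-(r/2)) ≤ b

theorem fk_small {r : ℝ} (hr : 0 ≤ r) (hr1 : r ≤ 1) : FK E r := by
  intro a b hb hab p hp
  have ha : IsStrictlyPositive a := hb.of_le hab
  have hpr : 0 < p + r := by linarith
  set α := (1 + r) / (p + r) with hα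
  have hα1 : (p + r) * (α - 1) = 1 - p := by rw [hα]; field_simp; ring
  set H := a ^ (r/2) with hH
  set K := b ^ (p/2) with hK
  have sH : star H = H := fk_sa _
  have sK : star K = K := fk_sa _
  have hKK : K * K = b ^ p := by rw [hK, ← CFC.rpow_add hb.isUnit]; congr 1; ring
  have hHH : H * H = a ^ r := by rw [hH, ← CFC.rpow_add ha.isUnit]; congr 1; ring
  have ht : IsUnit (K * H) := (hb.isUnit.cfcRpow _ hb.nonneg).mul (ha.isUnit.cfcRpow _ ha.nonneg)
  have h1 := fk_polar_s18 ht α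
  rw [star_mul, sH, sK] at h1
  have h2 : H * K * (K * H) = H * b ^ p * H := by rw [← hKK]; simp only [mul_assoc]
  have h3 : K * H * (H * K) = K * a ^ r * K := by rw [← hHH]; simp only [mul_assoc]
  rw [h2, h3] at h1
  rw [h1]
  have e1 : a ^ (-(r/2)) * H = 1 := CFC.rpow_neg_mul_rpow _ ha
  have e2 : H * a ^ (-(r/2)) = 1 := CFC.rpow_mul_rpow_neg _ ha
  have h4 : a ^ (-(r/2)) * (H * K * (K * a ^ r * K) ^ (α - 1) * (K * H)) * a ^ (-(r/2))
      = K * (K * a ^ r * K) ^ (α - 1) * K := by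
    calc _ = (a ^ (-(r/2)) * H) * (K * (K * a ^ r * K) ^ (α - 1) * K) * (H * a ^ (-(r/2))) := by
          simp only [mul_assoc]
      _ = _ := by rw [e1, e2, one_mul, mul_one]
  rw [h4]
  have h5 : b ^ r ≤ a ^ r := CFC.rpow_le_rpow ⟨hr, hr1⟩ hab
  have h6 : K * b ^ r * K ≤ K * a ^ r * K := fk_conj h5 b _
  have h7 : K * b ^ r * K = b ^ (p + r) := by
    rw [hK, ← CFC.rpow_add hb.isUnit, ← CFC.rpow_add hb.isUnit]; congr 1; ring
  rw [h7] at h6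
  have h8 := fk_antitone (IsStrictlyPositive.rpow b (p + r) hb) h6 (s := α - 1)
    (by have : 0 ≤ α := by positivity
        linarith)
    (by have : α ≤ 1 := by rw [hα, div_le_one hpr]; linarith
        linarith)
  rw [fk_rpow_rpow hb, hα1] at h8
  refine (fk_conj h8 b (p/2)).trans_eq ?_
  rw [← CFC.rpow_add hb.isUnit, ← CFC.rpow_add hb.isUnit]
  conv_rhs => rw [← CFC.rpow_one b hb.nonneg]
  congr 1; ring

theorem fk_step {r q : ℝ} (hr : 0 ≤ r) (hq : 0 ≤ q) (h1 : FK E r) (h2 : FK E q) :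
    FK E ((1 + r) * (1 + q) - 1) := by
  intro a b hb hab p hp
  have ha : IsStrictlyPositive a := hb.of_le hab
  have hpr : 0 < p + r := by linarith
  have hadd : ∀ x y : ℝ, a ^ x * a ^ y = a ^ (x + y) := fun x y => (CFC.rpow_add ha.isUnit).symm
  have k1 := h1 a b hb hab p hp
  set C := a ^ (r/2) * b ^ p * a ^ (r/2) with hC
  have hCpos : IsStrictlyPositive C := fk_conj_pos (IsStrictlyPositive.rpow b p hb) ha _
  set b1 := C ^ ((1 + r) / (p + r)) with hb1
  have hb1pos : IsStrictlyPositive b1 := IsStrictlyPositive.rpow C _ hCpos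
  have e1 : a ^ (r/2) * a ^ (-(r/2)) = 1 := CFC.rpow_mul_rpow_neg _ ha
  have e2 : a ^ (-(r/2)) * a ^ (r/2) = 1 := CFC.rpow_neg_mul_rpow _ ha
  have k2 : b1 ≤ a ^ (1 + r) := by
    have := fk_conj (k1.trans hab) a (r/2)
    have l : a ^ (r/2) * (a ^ (-(r/2)) * b1 * a ^ (-(r/2))) * a ^ (r/2) = b1 := by
      calc _ = (a ^ (r/2) * a ^ (-(r/2))) * b1 * (a ^ (-(r/2)) * a ^ (r/2)) := by
            simp only [mul_assoc]
        _ = _ := by rw [e1, e2, one_mul, mul_one]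
    have l' : a ^ (r/2) * a * a ^ (r/2) = a ^ (1 + r) := by
      calc _ = a ^ (r/2) * a ^ (1:ℝ) * a ^ (r/2) := by rw [CFC.rpow_one a ha.nonneg]
        _ = _ := by rw [hadd, hadd]; congr 1; ring
    rwa [l, l'] at this
  have k3 := h2 (a ^ (1 + r)) b1 hb1pos k2 ((p + r) / (1 + r))
    (by rw [le_div_iff₀ (by linarith)]; linarith)
  have hb1p : b1 ^ ((p + r) / (1 + r)) = C := by
    rw [hb1, fk_rpow_rpow hCpos]
    have : (1 + r) / (p + r) * ((p + r) / (1 + r)) = 1 := by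
      have : 1 + r ≠ 0 := by linarith
      field_simp
    rw [this, CFC.rpow_one C hCpos.nonneg]
  rw [hb1p, fk_rpow_rpow ha, fk_rpow_rpow ha] at k3
  have hexp : (1 + q) / ((p + r) / (1 + r) + q)
      = (1 + ((1 + r) * (1 + q) - 1)) / (p + ((1 + r) * (1 + q) - 1)) := by
    have : 1 + r ≠ 0 := by linarith
    have h3 : (p + r) / (1 + r) + q = (p + ((1 + r) * (1 + q) - 1)) / (1 + r) := by
      field_simp; ring
    rw [h3, div_div_eq_mul_div]; congr 1; ring
  rw [hexp] at k3
  have k4 := (fk_conj k3 a (-(r/2))).trans k1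
  have hm : a ^ ((1 + r) * (q/2)) * C * a ^ ((1 + r) * (q/2)) =
      a ^ (((1 + r) * (1 + q) - 1)/2) * b ^ p * a ^ (((1 + r) * (1 + q) - 1)/2) := by
    calc _ = (a ^ ((1 + r) * (q/2)) * a ^ (r/2)) * b ^ p * (a ^ (r/2) * a ^ ((1 + r) * (q/2))) := by
          rw [hC]; simp only [mul_assoc]
      _ = _ := by
          rw [hadd, hadd]
          congr 3 <;> ring
  rw [hm] at k4
  refine le_of_eq_of_le ?_ k4
  generalize (a ^ (((1 + r) * (1 + q) - 1)/2) * b ^ p * a ^ (((1 + r) * (1 + q) - 1)/2)) ^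
    ((1 + ((1 + r) * (1 + q) - 1)) / (p + ((1 + r) * (1 + q) - 1))) = M
  symm
  calc _ = (a ^ (-(r/2)) * a ^ ((1 + r) * (-(q/2)))) * M *
        (a ^ ((1 + r) * (-(q/2))) * a ^ (-(r/2))) := by simp only [mul_assoc]
    _ = _ := by
        rw [hadd, hadd]
        congr 3 <;> ring

theorem fk_all_s18 (k : ℕ) : ∀ r : ℝ, 0 ≤ r → 1 + r ≤ 2 ^ (2 ^ k) → FK E r := by
  induction k with
  | zero => intro r hr h; exact fk_small hr (by norm_num at h; linarith)
  | succ k ih =>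
    intro r hr h
    have h1 : 1 ≤ √(1 + r) := by rw [Real.one_le_sqrt]; linarith
    have h2 : √(1 + r) ≤ 2 ^ (2 ^ k) := by
      rw [Real.sqrt_le_left (by positivity)]
      rwa [← pow_mul, ← pow_succ]
    have h3 := ih (√(1 + r) - 1) (by linarith) (by linarith)
    have h4 := fk_step (by linarith) (by linarith) h3 h3
    have h5 : (1 + (√(1 + r) - 1)) * (1 + (√(1 + r) - 1)) - 1 = r := by
      have := Real.mul_self_sqrt (show 0 ≤ 1 + r by linarith)
      linear_combination this
    rwa [h5] at h4

theorem fk_main_s18 {r : ℝ} (hr : 0 ≤ r) : FK E r := by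
  obtain ⟨k, hk⟩ := pow_unbounded_of_one_lt (1 + r) (one_lt_two)
  refine fk_all_s18 k r hr (hk.le.trans ?_)
  exact pow_le_pow_right₀ one_le_two (Nat.lt_two_pow_self).le

end Generic

section Mat
open scoped MatrixOrder Matrix.Norms.L2Operator

theorem fk_mpow {n : ℕ} {A : Matrix (Fin n) (Fin n) ℂ} (hA : 0 ≤ A) (p : ℝ) :
    mpow A p = A ^ p := (CFC.rpow_eq_cfc_real hA).symm

theorem fk_matrix {n : ℕ} (A B : Matrix (Fin n) (Fin n) ℂ)
    (hA : A.PosDef) (hB : B.PosDef) (hBA : loewnerLE B A) (r p : ℝ) (hr : 0 < r) (hp : 1 ≤ p) :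
    loewnerLE (geomMean ((1 + r) / (p + r)) (mpow A (-r)) (mpow B p)) B := by
  have hA' : IsStrictlyPositive A := hA.isStrictlyPositive
  have hB' : IsStrictlyPositive B := hB.isStrictlyPositive
  have hle : B ≤ A := hBA
  have h := fk_main_s18 hr.le A B hB' hle p hp
  unfold geomMean
  rw [fk_mpow hA'.nonneg, fk_mpow hB'.nonneg, fk_mpow CFC.rpow_nonneg, fk_mpow CFC.rpow_nonneg,
    fk_rpow_rpow hA', fk_rpow_rpow hA']
  have e1 : -r * (1/2) = -(r/2) := by ring
  have e2 : -r * (-(1/2)) = r/2 := by ring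
  rw [e1, e2, fk_mpow (fk_conj_pos (IsStrictlyPositive.rpow B p hB') hA' _).nonneg]
  exact h

end Mat

/-- Fujii–Kamei lemma: if `A ≥ B > 0`, `r > 0` and `p ≥ 1`, then
`A^{-r} ♯_{(1+r)/(p+r)} B^p ≤ B ≤ A`. -/
theorem fujii_kamei {n : ℕ} (A B : Matrix (Fin n) (Fin n) ℂ)
    (hA : A.PosDef) (hB : B.PosDef) (hBA : loewnerLE B A) (r p : ℝ) (hr : 0 < r) (hp : 1 ≤ p) :
    loewnerLE (geomMean ((1 + r) / (p + r)) (mpow A (-r)) (mpow B p)) B ∧ loewnerLE B A :=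
  ⟨fk_matrix A B hA hB hBA r p hr hp, hBA⟩
end

section
/- Furuta's inequality: let A, B be positive semidefinite matrices with A ≥ B, let r ≥ 0, p ≥ 1, and q ≥ (p+r)/(1+r). Then A^{(p+r)/q} ≥ (A^{r/2} B^p A^{r/2})^{1/q}. -/
open scoped Matrix ComplexOrder

open scoped Matrix.Norms.L2Operator MatrixOrder
open Filter Topology

section general

variable {𝒜 : Type*} [CStarAlgebra 𝒜] [PartialOrder 𝒜] [StarOrderedRing 𝒜]

lemma sp_rpow {a : 𝒜} (ha : IsStrictlyPositive a) (x : ℝ) : IsStrictlyPositive (a ^ x) :=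
  (ha.isUnit.cfcRpow x ha.nonneg).isStrictlyPositive CFC.rpow_nonneg

lemma sp_of_le {a b : 𝒜} (ha : IsStrictlyPositive a) (h : a ≤ b) : IsStrictlyPositive b :=
  (CStarAlgebra.isUnit_of_le a h ha).isStrictlyPositive (ha.nonneg.trans h)

lemma rpow_rpow' {a : 𝒜} (ha : IsStrictlyPositive a) (x y : ℝ) : (a ^ x) ^ y = a ^ (x * y) := by
  by_cases hx : x = 0
  · subst hx
    rw [CFC.rpow_zero a ha.nonneg, zero_mul, CFC.rpow_zero a ha.nonneg, CFC.one_rpow]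
  · exact CFC.rpow_rpow a x y hx ha

lemma rpow_neg_anti {a b : 𝒜} (ha : IsStrictlyPositive a) (h : a ≤ b) {s : ℝ}
    (hs : s ∈ Set.Icc (0 : ℝ) 1) : b ^ (-s) ≤ a ^ (-s) := by
  have hb := sp_of_le ha h
  have h1 : a ^ s ≤ b ^ s := CFC.rpow_le_rpow hs h
  have ea : a ^ (-s) = (a ^ s) ^ (-1 : ℝ) := by rw [rpow_rpow' ha]; simp
  have eb : b ^ (-s) = (b ^ s) ^ (-1 : ℝ) := by rw [rpow_rpow' hb]; simp
  obtain ⟨u, hu⟩ := (sp_rpow ha s).isUnit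
  obtain ⟨v, hv⟩ := (sp_rpow hb s).isUnit
  have hu0 : (0 : 𝒜) ≤ u := hu ▸ CFC.rpow_nonneg
  have hv0 : (0 : 𝒜) ≤ v := hv ▸ CFC.rpow_nonneg
  rw [ea, eb, ← hu, ← hv, CFC.rpow_neg_one_eq_inv u hu0, CFC.rpow_neg_one_eq_inv v hv0]
  exact CStarAlgebra.inv_le_inv hu0 (by rw [hu, hv]; exact h1)

lemma unitary_conj_rpow {u : 𝒜} (hu : u ∈ unitary 𝒜) {a : 𝒜} (ha : IsStrictlyPositive a) (s : ℝ) :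
    (u * a * star u) ^ s = u * a ^ s * star u := by
  let φ := Unitary.conjStarAlgAut ℂ 𝒜 ⟨u, hu⟩
  have hφ : ∀ x, φ x = u * x * star u := fun x => rfl
  have hc : Continuous φ := by
    change Continuous (fun x => u * x * star u)
    fun_prop
  have h0 : 0 ≤ φ a := by rw [hφ]; exact star_right_conjugate_nonneg ha.nonneg u
  have hcont : ContinuousOn (fun x : ℝ => x ^ s) (spectrum ℝ a) := by
    intro x hx
    have : x ≠ 0 := fun h => spectrum.zero_notMem ℝ ha.isUnit (h ▸ hx)
    exact (Real.continuousAt_rpow_const x s (Or.inl this)).continuousWithinAt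
  have := StarAlgHomClass.map_cfc (S := ℂ) φ (fun x : ℝ => x ^ s) a hcont hc
    ha.isSelfAdjoint (IsSelfAdjoint.of_nonneg h0)
  rw [← CFC.rpow_eq_cfc_real ha.nonneg, ← CFC.rpow_eq_cfc_real h0, hφ, hφ] at this
  exact this.symm

/-- `(T T*)^(s+1) = T (T* T)^s T*` for invertible `T`. -/
lemma mul_star_rpow {T : 𝒜} (hT : IsUnit T) (s : ℝ) :
    (T * star T) ^ (s + 1) = T * (star T * T) ^ s * star T := by
  set H := star T * T with hH
  have hHs : IsStrictlyPositive H :=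
    (hT.star.mul hT).isStrictlyPositive (star_mul_self_nonneg T)
  have hsa : ∀ x : ℝ, star (H ^ x) = H ^ x := fun x =>
    (IsSelfAdjoint.of_nonneg (CFC.rpow_nonneg (a := H) (y := x))).star_eq
  have hadd : ∀ x y : ℝ, H ^ x * H ^ y = H ^ (x + y) := fun x y => (CFC.rpow_add hHs.isUnit).symm
  have hone : H ^ (1 : ℝ) = H := CFC.rpow_one H hHs.nonneg
  set U := T * H ^ (-(1/2) : ℝ) with hU
  have hsU : star U = H ^ (-(1/2) : ℝ) * star T := by rw [hU, star_mul, hsa]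
  have h1 : star U * U = 1 := by
    rw [hsU, hU]
    calc H ^ (-(1/2) : ℝ) * star T * (T * H ^ (-(1/2) : ℝ))
        = H ^ (-(1/2) : ℝ) * H ^ (1 : ℝ) * H ^ (-(1/2) : ℝ) := by
          rw [hone, hH]; simp only [mul_assoc]
      _ = 1 := by rw [hadd, hadd]; norm_num; exact CFC.rpow_zero H hHs.nonneg
  have hUu : IsUnit U := hT.mul (sp_rpow hHs _).isUnit
  have h2 : U * star U = 1 := by
    obtain ⟨v, hv⟩ := hUu
    have : star U = ↑v⁻¹ := by
      rw [← hv] at h1 ⊢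
      exact (Units.inv_eq_of_mul_eq_one_left h1).symm
    rw [this, ← hv]; simp
  have key := unitary_conj_rpow (u := U) (Unitary.mem_iff.2 ⟨h1, h2⟩) hHs
  have e1 : ∀ x : ℝ, U * H ^ x * star U = T * H ^ (x - 1) * star T := by
    intro x
    rw [hsU, hU]
    calc T * H ^ (-(1/2) : ℝ) * H ^ x * (H ^ (-(1/2) : ℝ) * star T)
        = T * (H ^ (-(1/2) : ℝ) * H ^ x * H ^ (-(1/2) : ℝ)) * star T := by
          simp only [mul_assoc]
      _ = _ := by rw [hadd, hadd]; congr 3; ring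
  have e2 : U * H * star U = T * star T := by
    have := e1 1
    rw [hone, sub_self, CFC.rpow_zero H hHs.nonneg, mul_one] at this
    exact this
  have := key (s + 1)
  rw [e2, e1] at this
  simpa using this

lemma conj_sp {a b : 𝒜} (ha : IsStrictlyPositive a) (hb : IsStrictlyPositive b) :
    IsStrictlyPositive (a * b * a) := by
  refine ((ha.isUnit.mul hb.isUnit).mul ha.isUnit).isStrictlyPositive ?_
  exact conjugate_nonneg_of_nonneg hb.nonneg ha.nonneg

lemma furuta_step1 {a b : 𝒜} (hb : IsStrictlyPositive b) (h : b ≤ a) {r p : ℝ}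
    (hr : r ∈ Set.Icc (0 : ℝ) 1) (hp : 1 ≤ p) :
    (a ^ (r / 2) * b ^ p * a ^ (r / 2)) ^ ((1 + r) / (p + r)) ≤ a ^ (1 + r) := by
  obtain ⟨hr0, hr1⟩ := hr
  have ha := sp_of_le hb h
  have hsa : ∀ x : ℝ, star (a ^ x) = a ^ x := fun x =>
    (IsSelfAdjoint.of_nonneg (CFC.rpow_nonneg (a := a) (y := x))).star_eq
  have hsb : ∀ x : ℝ, star (b ^ x) = b ^ x := fun x =>
    (IsSelfAdjoint.of_nonneg (CFC.rpow_nonneg (a := b) (y := x))).star_eq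
  have hadda : ∀ x y : ℝ, a ^ x * a ^ y = a ^ (x + y) := fun x y => (CFC.rpow_add ha.isUnit).symm
  have haddb : ∀ x y : ℝ, b ^ x * b ^ y = b ^ (x + y) := fun x y => (CFC.rpow_add hb.isUnit).symm
  have hpr : 0 < p + r := by linarith
  set s : ℝ := (p - 1) / (p + r) with hs
  have hs01 : s ∈ Set.Icc (0 : ℝ) 1 :=
    ⟨div_nonneg (by linarith) hpr.le, by rw [hs, div_le_one hpr]; linarith⟩
  have hexp : (1 + r) / (p + r) = -s + 1 := by rw [hs]; field_simp; ring
  have hT : IsUnit (a ^ (r / 2) * b ^ (p / 2)) :=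
    (sp_rpow ha _).isUnit.mul (sp_rpow hb _).isUnit
  have key := mul_star_rpow hT (-s)
  rw [star_mul, hsa, hsb] at key
  have e1 : a ^ (r / 2) * b ^ (p / 2) * (b ^ (p / 2) * a ^ (r / 2))
      = a ^ (r / 2) * b ^ p * a ^ (r / 2) := by
    rw [mul_assoc, ← mul_assoc (b ^ (p / 2)), haddb, add_halves, ← mul_assoc]
  have e2 : b ^ (p / 2) * a ^ (r / 2) * (a ^ (r / 2) * b ^ (p / 2))
      = b ^ (p / 2) * a ^ r * b ^ (p / 2) := by
    rw [mul_assoc, ← mul_assoc (a ^ (r / 2)), hadda, add_halves, ← mul_assoc]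
  rw [e1, e2] at key
  have l1 : b ^ (p + r) ≤ b ^ (p / 2) * a ^ r * b ^ (p / 2) := by
    have := conjugate_le_conjugate_of_nonneg (CFC.rpow_le_rpow ⟨hr0, hr1⟩ h)
      (CFC.rpow_nonneg (a := b) (y := p / 2))
    rw [haddb, haddb] at this
    convert this using 2
    ring
  have l2 := rpow_neg_anti (sp_rpow hb (p + r)) l1 hs01
  rw [rpow_rpow' hb] at l2
  have e3 : (p + r) * -s = 1 - p := by rw [hs]; field_simp; ring
  rw [e3] at l2
  have l3 := star_right_conjugate_le_conjugate l2 (a ^ (r / 2) * b ^ (p / 2))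
  rw [star_mul, hsa, hsb, ← key, ← hexp] at l3
  refine l3.trans ?_
  have e4 : a ^ (r / 2) * b ^ (p / 2) * b ^ (1 - p) * (b ^ (p / 2) * a ^ (r / 2))
      = a ^ (r / 2) * b * a ^ (r / 2) := by
    calc _ = a ^ (r / 2) * (b ^ (p / 2) * b ^ (1 - p) * b ^ (p / 2)) * a ^ (r / 2) := by
          simp only [mul_assoc]
      _ = _ := by
        rw [haddb, haddb]
        have : p / 2 + (1 - p) + p / 2 = 1 := by ring
        rw [this, CFC.rpow_one b hb.nonneg]
  rw [e4]
  have l4 := conjugate_le_conjugate_of_nonneg h (CFC.rpow_nonneg (a := a) (y := r / 2))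
  refine l4.trans (le_of_eq ?_)
  nth_rewrite 2 [← CFC.rpow_one a ha.nonneg]
  rw [hadda, hadda]
  congr 1
  ring

lemma furuta_step2 {a b : 𝒜} (hb : IsStrictlyPositive b) (h : b ≤ a) {p : ℝ} (hp : 1 ≤ p) (k : ℕ) :
    ∀ r : ℝ, 0 ≤ r → 1 + r ≤ 2 ^ (k + 1) →
    (a ^ (r / 2) * b ^ p * a ^ (r / 2)) ^ ((1 + r) / (p + r)) ≤ a ^ (1 + r) := by
  have ha := sp_of_le hb h
  have hadda : ∀ x y : ℝ, a ^ x * a ^ y = a ^ (x + y) := fun x y => (CFC.rpow_add ha.isUnit).symm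
  induction k with
  | zero =>
    intro r hr hr1
    exact furuta_step1 hb h ⟨hr, by norm_num at hr1; linarith⟩ hp
  | succ k ih =>
    intro r' hr' hk
    by_cases h2 : r' ≤ 1
    · exact furuta_step1 hb h ⟨hr', h2⟩ hp
    push Not at h2
    obtain ⟨r, rfl⟩ : ∃ r, r' = 2 * r + 1 := ⟨(r' - 1) / 2, by ring⟩
    have hr : 0 < r := by linarith
    have hi := ih r hr.le (by rw [pow_succ] at hk; linarith)
    set X := a ^ (r / 2) * b ^ p * a ^ (r / 2) with hX
    have hXs : IsStrictlyPositive X := conj_sp (sp_rpow ha _) (sp_rpow hb _)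
    have hpr : 0 < p + r := by linarith
    have h1r : 0 < 1 + r := by linarith
    have hp1 : 1 ≤ (p + r) / (1 + r) := by rw [le_div_iff₀ h1r]; linarith
    have := furuta_step1 (sp_rpow hXs _) hi (r := 1) ⟨by norm_num, le_refl _⟩ hp1
    rw [rpow_rpow' hXs, rpow_rpow' ha, rpow_rpow' ha] at this
    have e1 : (1 + r) / (p + r) * ((p + r) / (1 + r)) = 1 := by field_simp
    have e2 : ((1 : ℝ) + 1) / ((p + r) / (1 + r) + 1) = (1 + (2 * r + 1)) / (p + (2 * r + 1)) := by
      have : p + r + (1 + r) ≠ 0 := by linarith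
      have : p + (2 * r + 1) ≠ 0 := by linarith
      field_simp
      ring
    have e3 : (1 + r) * (1 + 1) = 1 + (2 * r + 1) := by ring
    rw [e1, e2, e3, CFC.rpow_one X hXs.nonneg] at this
    have e4 : a ^ ((1 + r) * (1 / 2)) * X * a ^ ((1 + r) * (1 / 2))
        = a ^ ((2 * r + 1) / 2) * b ^ p * a ^ ((2 * r + 1) / 2) := by
      calc _ = (a ^ ((1 + r) * (1 / 2)) * a ^ (r / 2)) * b ^ p
            * (a ^ (r / 2) * a ^ ((1 + r) * (1 / 2))) := by rw [hX]; simp only [mul_assoc]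
        _ = _ := by
          rw [hadda, hadda]
          congr 3 <;> ring
    rw [e4] at this
    exact this

lemma furuta_sp {a b : 𝒜} (hb : IsStrictlyPositive b) (h : b ≤ a) {r p q : ℝ} (hr : 0 ≤ r)
    (hp : 1 ≤ p) (hq : (p + r) / (1 + r) ≤ q) :
    (a ^ (r / 2) * b ^ p * a ^ (r / 2)) ^ (1 / q) ≤ a ^ ((p + r) / q) := by
  have ha := sp_of_le hb h
  have hpr : 0 < p + r := by linarith
  have h1r : 0 < 1 + r := by linarith
  have hq0 : 0 < q := lt_of_lt_of_le (div_pos hpr h1r) hq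
  obtain ⟨k, hk⟩ := pow_unbounded_of_one_lt (1 + r) (one_lt_two)
  have h1 := furuta_step2 hb h hp k r hr
    (hk.le.trans (pow_le_pow_right₀ (by norm_num) (Nat.le_succ k)))
  have hXs : IsStrictlyPositive (a ^ (r / 2) * b ^ p * a ^ (r / 2)) :=
    conj_sp (sp_rpow ha _) (sp_rpow hb _)
  have h2 := CFC.rpow_le_rpow (p := (p + r) / (1 + r) / q)
    ⟨by positivity, by rw [div_le_one hq0]; exact hq⟩ h1
  rw [rpow_rpow' hXs, rpow_rpow' ha] at h2
  convert h2 using 2 <;> field_simp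

lemma continuousOn_rpow_nonneg {s : ℝ} (hs : 0 ≤ s) :
    ContinuousOn (fun a : 𝒜 => a ^ s) {a : 𝒜 | 0 ≤ a} :=
  continuousOn_id.cfc_nnreal_of_mem_nhdsSet _ (s := Set.univ) Filter.univ_mem
    (hf := (NNReal.continuous_rpow_const hs).continuousOn)

lemma tendsto_rpow_nonneg {s : ℝ} (hs : 0 ≤ s) {f : ℝ → 𝒜} {a : 𝒜} (ha : 0 ≤ a)
    (hf : Tendsto f (𝓝[>] 0) (𝓝 a)) (hf0 : ∀ᶠ t in 𝓝[>] (0 : ℝ), 0 ≤ f t) :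
    Tendsto (fun t => f t ^ s) (𝓝[>] 0) (𝓝 (a ^ s)) :=
  ((continuousOn_rpow_nonneg hs) a ha).tendsto.comp (tendsto_nhdsWithin_iff.2 ⟨hf, hf0⟩)

lemma furuta_general {a b : 𝒜} (hb : 0 ≤ b) (h : b ≤ a) {r p q : ℝ} (hr : 0 ≤ r)
    (hp : 1 ≤ p) (hq : (p + r) / (1 + r) ≤ q) :
    (a ^ (r / 2) * b ^ p * a ^ (r / 2)) ^ (1 / q) ≤ a ^ ((p + r) / q) := by
  have ha := hb.trans h
  have hpr : 0 < p + r := by linarith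
  have h1r : 0 < 1 + r := by linarith
  have hq0 : 0 < q := lt_of_lt_of_le (div_pos hpr h1r) hq
  have hev : ∀ᶠ t in 𝓝[>] (0 : ℝ), 0 < t := eventually_mem_nhdsWithin
  have hsp : ∀ t : ℝ, 0 < t → ∀ x : 𝒜, 0 ≤ x → IsStrictlyPositive (x + algebraMap ℝ 𝒜 t) := by
    intro t ht x hx
    exact sp_of_le (isStrictlyPositive_algebraMap ht) (le_add_of_nonneg_left hx)
  have hlim : ∀ x : 𝒜, Tendsto (fun t : ℝ => x + algebraMap ℝ 𝒜 t) (𝓝[>] 0) (𝓝 x) := by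
    intro x
    have : Continuous (fun t : ℝ => x + algebraMap ℝ 𝒜 t) := by fun_prop
    have := (this.tendsto 0).mono_left (nhdsWithin_le_nhds (s := Set.Ioi 0))
    simpa using this
  have hla : ∀ s : ℝ, 0 ≤ s → ∀ x : 𝒜, 0 ≤ x →
      Tendsto (fun t : ℝ => (x + algebraMap ℝ 𝒜 t) ^ s) (𝓝[>] 0) (𝓝 (x ^ s)) := by
    intro s hs x hx
    exact tendsto_rpow_nonneg hs hx (hlim x) (hev.mono fun t ht => (hsp t ht x hx).nonneg)
  have hr2 : 0 ≤ r / 2 := by positivity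
  have hmid := ((hla (r / 2) hr2 a ha).mul (hla p (by linarith) b hb)).mul (hla (r / 2) hr2 a ha)
  have hleft := tendsto_rpow_nonneg (s := 1 / q) (by positivity)
    (conjugate_nonneg_of_nonneg (CFC.rpow_nonneg (a := b) (y := p))
      (CFC.rpow_nonneg (a := a) (y := r / 2))) hmid
    (Eventually.of_forall fun t => conjugate_nonneg_of_nonneg CFC.rpow_nonneg CFC.rpow_nonneg)
  have hright := hla ((p + r) / q) (by positivity) a ha
  refine le_of_tendsto_of_tendsto hleft hright (hev.mono fun t ht => ?_)
  exact furuta_sp (hsp t ht b hb) (by gcongr) hr hp hq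

end general

/-- Furuta's inequality: if `A ≥ B ≥ 0`, `r ≥ 0`, `p ≥ 1` and `q ≥ (p+r)/(1+r)`, then
`A^{(p+r)/q} ≥ (A^{r/2} B^p A^{r/2})^{1/q}`. -/
theorem furuta {n : ℕ} (A B : Matrix (Fin n) (Fin n) ℂ)
    (hA : A.PosSemidef) (hB : B.PosSemidef) (hBA : loewnerLE B A)
    (r p q : ℝ) (hr : 0 ≤ r) (hp : 1 ≤ p) (hq : (p + r) / (1 + r) ≤ q) :
    loewnerLE (mpow (mpow A (r / 2) * mpow B p * mpow A (r / 2)) (1 / q))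
      (mpow A ((p + r) / q)) := by
  have hA0 : 0 ≤ A := Matrix.nonneg_iff_posSemidef.2 hA
  have hB0 : 0 ≤ B := Matrix.nonneg_iff_posSemidef.2 hB
  have hle : B ≤ A := hBA
  have key := furuta_general hB0 hle hr hp hq
  have hm : ∀ (X : Matrix (Fin n) (Fin n) ℂ), 0 ≤ X → ∀ s : ℝ, mpow X s = X ^ s := by
    intro X hX s
    exact (CFC.rpow_eq_cfc_real hX).symm
  rw [hm A hA0, hm B hB0, hm A hA0, hm _ (conjugate_nonneg_of_nonneg CFC.rpow_nonneg CFC.rpow_nonneg)]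
  exact key
end
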